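/- arXiv:1510.00735 — 2 statements merged into one kernel-verified Lean document; each statement's English description precedes it below -/
import Mathlib

section
/- Let k(T) = 63(3T² − 3T + 1)(T² + T + 1)(T² − 3T + 3) ∈ ℚ[T]. Then for all but finitely many rational numbers t, the elliptic curve W_{k(t)} : y² = x³ − 432k(t)² over ℚ has Mordell–Weil rank at least 2; equivalently, the set of t ∈ ℚ for which the ℤ-module W_{k(t)}(ℚ) has rank < 2 is finite. -/
open WeierstrassCurve

/-- The polynomial `k(T) = 63(3T² − 3T + 1)(T² + T + 1)(T² − 3T + 3)` evaluated at `t ∈ ℚ`. -/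
def k7 (t : ℚ) : ℚ :=
  63 * (3 * t ^ 2 - 3 * t + 1) * (t ^ 2 + t + 1) * (t ^ 2 - 3 * t + 3)

/-- The elliptic curve `W_{k(t)} : y² = x³ - 432k(t)²` over `ℚ`. -/
def W7 (t : ℚ) : Affine ℚ :=
  { a₁ := 0, a₂ := 0, a₃ := 0, a₄ := 0, a₆ := -432 * k7 t ^ 2 }

section
open Filter Topology

lemma quad_rec (a : ℤ → ℝ) (c : ℝ) (h : ∀ m, a (m + 1) + a (m - 1) = 2 * a m + 2 * c) (m : ℤ) :
    a m = c * m ^ 2 + (a 1 - a 0 - c) * m + a 0 := by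
  suffices H : ∀ m : ℤ, a m = c * m ^ 2 + (a 1 - a 0 - c) * m + a 0 ∧
      a (m + 1) = c * (m + 1) ^ 2 + (a 1 - a 0 - c) * (m + 1) + a 0 from (H m).1
  intro m
  induction m using Int.induction_on with
  | zero => simp
  | succ i ih =>
    obtain ⟨h1, h2⟩ := ih
    refine ⟨by push_cast; exact h2, ?_⟩
    have := h (i + 1)
    rw [show (i : ℤ) + 1 - 1 = i by ring, h1, h2] at this
    push_cast at *
    linarith
  | pred i ih =>
    obtain ⟨h1, h2⟩ := ih
    have := h (-i)
    rw [h1, h2] at this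
    refine ⟨?_, ?_⟩
    · push_cast at *
      linarith
    · rw [show (-(i : ℤ) - 1 + 1) = -i by ring, h1]
      push_cast
      ring

lemma quad_form {G : Type*} [AddCommGroup G] (f : G → ℝ)
    (hf : ∀ P Q, f (P + Q) + f (P - Q) = 2 * f P + 2 * f Q) (P Q : G) (m n : ℤ) :
    f (m • P + n • Q) = m ^ 2 * f P + n ^ 2 * f Q + m * n * (f (P + Q) - f P - f Q) := by
  have f0 : f 0 = 0 := by have := hf 0 0; simp at this; linarith
  have key (R : G) (n : ℤ) : f (R + n • Q) =
      f Q * n ^ 2 + (f (R + Q) - f R - f Q) * n + f R := by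
    have := quad_rec (fun n ↦ f (R + n • Q)) (f Q) (fun m ↦ by
      have := hf (R + m • Q) Q
      rw [show R + (m + 1) • Q = R + m • Q + Q by module,
        show R + (m - 1) • Q = R + m • Q - Q by module]
      exact this) n
    simpa using this
  have key1 (R : G) (m : ℤ) : f (m • P + R) =
      f P * m ^ 2 + (f (P + R) - f R - f P) * m + f R := by
    have := quad_rec (fun n ↦ f (n • P + R)) (f P) (fun m ↦ by
      have := hf (m • P + R) P
      rw [show (m + 1) • P + R = m • P + R + P by module,
        show (m - 1) • P + R = m • P + R - P by module]
      exact this) m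
    simpa using this
  rw [key1 (n • Q) m, key P n]
  have := key 0 n
  simp [f0] at this
  rw [this]
  ring

lemma exists_canonical {G : Type*} [AddCommGroup G] (h : G → ℝ) (C D : ℝ)
    (h2 : ∀ P, |h (P + P) - 4 * h P| ≤ C)
    (hD : ∀ P Q, |h (P + Q) + h (P - Q) - 2 * h P - 2 * h Q| ≤ D) :
    ∃ f : G → ℝ, (∀ P, |f P - h P| ≤ C) ∧
      ∀ P Q, f (P + Q) + f (P - Q) = 2 * f P + 2 * f Q := by
  have hC : 0 ≤ C := (abs_nonneg _).trans (h2 0)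
  let u : G → ℕ → ℝ := fun P n ↦ h (2 ^ n • P) / 4 ^ n
  have hu (P : G) (n : ℕ) : dist (u P n) (u P (n + 1)) ≤ C / 2 / 2 ^ n := by
    rw [dist_comm, Real.dist_eq]
    have e : u P (n + 1) - u P n = (h (2 ^ n • P + 2 ^ n • P) - 4 * h (2 ^ n • P)) / 4 ^ (n + 1) := by
      simp only [u]
      rw [show 2 ^ (n + 1) • P = 2 ^ n • P + 2 ^ n • P by rw [pow_succ, mul_smul, two_smul, smul_add]]
      field_simp
      ring
    rw [e, abs_div, abs_of_pos (show (0 : ℝ) < 4 ^ (n + 1) by positivity), div_div]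
    refine div_le_div₀ hC (h2 _) (by positivity) ?_
    rw [← pow_succ']
    exact pow_le_pow_left₀ (by norm_num) (by norm_num) _
  have hc (P : G) : ∃ a, Tendsto (u P) atTop (𝓝 a) :=
    cauchySeq_tendsto_of_complete (cauchySeq_of_le_geometric_two (hu P))
  choose f hf using hc
  refine ⟨f, fun P ↦ ?_, fun P Q ↦ ?_⟩
  · have := dist_le_of_le_geometric_two_of_tendsto₀ (hu P) (hf P)
    rw [dist_comm, Real.dist_eq] at this
    simpa [u] using this
  · have l1 := ((hf (P + Q)).add (hf (P - Q))).sub (((hf P).const_mul 2).add ((hf Q).const_mul 2))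
    have l2 : Tendsto (fun n : ℕ ↦ D / 4 ^ n) atTop (𝓝 0) :=
      tendsto_const_nhds.div_atTop (tendsto_pow_atTop_atTop_of_one_lt (by norm_num))
    have l3 : Tendsto (fun n ↦ u (P + Q) n + u (P - Q) n - (2 * u P n + 2 * u Q n)) atTop (𝓝 0) := by
      refine squeeze_zero_norm (fun n ↦ ?_) l2
      have := hD (2 ^ n • P) (2 ^ n • Q)
      simp only [u, smul_add, smul_sub]
      rw [Real.norm_eq_abs, show ∀ a b c d : ℝ, a / 4 ^ n + b / 4 ^ n - (2 * (c / 4 ^ n) + 2 * (d / 4 ^ n)) = (a + b - 2 * c - 2 * d) / 4 ^ n by intros; ring, abs_div, abs_of_pos (show (0 : ℝ) < 4 ^ n by positivity)]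
      gcongr
    have := tendsto_nhds_unique l1 l3
    linarith

lemma indep_of_heights {G : Type} [AddCommGroup G] (h : G → ℝ) (C D e A : ℝ)
    (h2 : ∀ P, |h (P + P) - 4 * h P| ≤ C)
    (hD : ∀ P Q, |h (P + Q) + h (P - Q) - 2 * h P - 2 * h Q| ≤ D) (P Q : G)
    (hP : |h P - A| ≤ e) (hQ : |h Q - A| ≤ e) (hS : |h (P + Q) - A| ≤ e)
    (hA : 5 * (e + C) < A) : 2 ≤ Module.rank ℤ G := by
  obtain ⟨f, hf, hq⟩ := exists_canonical h C D h2 hD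
  have hli : LinearIndependent ℤ ![P, Q] := by
    rw [LinearIndependent.pair_iff]
    intro m n hmn
    have f0 : f 0 = 0 := by have := hq 0 0; simp at this; linarith
    have := quad_form f hq P Q m n
    rw [hmn, f0] at this
    have h1 := abs_le.mp (hf P)
    have h3 := abs_le.mp (hf Q)
    have h4 := abs_le.mp (hf (P + Q))
    rw [abs_le] at hP hQ hS
    set p := f P
    set q := f Q
    set s := f (P + Q)
    have hmn : (m : ℝ) ^ 2 + (n : ℝ) ^ 2 ≤ 0 := by
      by_contra hpos
      push Not at hpos
      have a1 : (m : ℝ) ^ 2 * (A - (e + C)) ≤ m ^ 2 * p := by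
        apply mul_le_mul_of_nonneg_left _ (sq_nonneg _); linarith
      have a2 : (n : ℝ) ^ 2 * (A - (e + C)) ≤ n ^ 2 * q := by
        apply mul_le_mul_of_nonneg_left _ (sq_nonneg _); linarith
      have a3 : |s - p - q| ≤ A + 3 * (e + C) := by rw [abs_le]; constructor <;> linarith
      have a4 : |(m : ℝ) * n| ≤ (m ^ 2 + n ^ 2) / 2 := by
        rw [abs_le]; constructor <;> nlinarith [sq_nonneg ((m : ℝ) - n), sq_nonneg ((m : ℝ) + n)]
      have a5 : |(m : ℝ) * n * (s - p - q)| ≤ (m ^ 2 + n ^ 2) / 2 * (A + 3 * (e + C)) := by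
        rw [abs_mul]; gcongr
      have a6 := (abs_le.mp a5).1
      nlinarith
    have hm : (m : ℝ) = 0 := by nlinarith [sq_nonneg (m : ℝ), sq_nonneg (n : ℝ)]
    have hn : (n : ℝ) = 0 := by nlinarith [sq_nonneg (m : ℝ), sq_nonneg (n : ℝ)]
    exact ⟨by exact_mod_cast hm, by exact_mod_cast hn⟩
  simpa using hli.cardinal_le_rank

end

section
open Height

lemma h_add_const (c : ℚ) : ∃ C, ∀ x : ℚ, |logHeight₁ (x + c) - logHeight₁ x| ≤ C := by
  refine ⟨totalWeight ℚ * Real.log 2 + logHeight₁ c, fun x ↦ abs_le.mpr ⟨?_, ?_⟩⟩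
  · have := logHeight₁_sub_le (x + c) c
    rw [add_sub_cancel_right] at this
    linarith
  · have := logHeight₁_add_le x c
    linarith

lemma h_mul_const (c : ℚ) (hc : c ≠ 0) :
    ∃ C, ∀ x : ℚ, |logHeight₁ (c * x) - logHeight₁ x| ≤ C := by
  refine ⟨logHeight₁ c, fun x ↦ abs_le.mpr ⟨?_, ?_⟩⟩
  · have := logHeight₁_mul_le c⁻¹ (c * x)
    rw [inv_mul_cancel_left₀ hc, logHeight₁_inv] at this
    linarith
  · have := logHeight₁_mul_le c x
    linarith

/-- The height of `(112/N - 4)/36`, with `N = 3t²-3t+1`, is `2h(t) + O(1)`. -/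
lemma h_param : ∃ C, ∀ t : ℚ,
    |logHeight₁ ((28 / (3 * t ^ 2 - 3 * t + 1) - 1) / 9) - 2 * logHeight₁ t| ≤ C := by
  obtain ⟨C1, h1⟩ := h_mul_const (1 / 9) (by norm_num)
  obtain ⟨C2, h2⟩ := h_add_const (-1)
  obtain ⟨C3, h3⟩ := h_mul_const 28 (by norm_num)
  obtain ⟨C4, h4⟩ := h_add_const (1 / 4)
  obtain ⟨C5, h5⟩ := h_mul_const 3 (by norm_num)
  obtain ⟨C6, h6⟩ := h_add_const (-1 / 2)
  refine ⟨C1 + C2 + C3 + C4 + C5 + 2 * C6, fun t ↦ ?_⟩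
  set N := 3 * t ^ 2 - 3 * t + 1 with hN
  have e1 : (28 / N - 1) / 9 = 1 / 9 * (28 * N⁻¹ + -1) := by ring
  have e2 : N = 3 * (t + -1 / 2) ^ 2 + 1 / 4 := by rw [hN]; ring
  have g1 := h1 (28 * N⁻¹ + -1)
  have g2 := h2 (28 * N⁻¹)
  have g3 := h3 N⁻¹
  rw [logHeight₁_inv] at g3
  have g4 := h4 (3 * (t + -1 / 2) ^ 2)
  rw [← e2] at g4
  have g5 := h5 ((t + -1 / 2) ^ 2)
  rw [logHeight₁_pow] at g5
  have g6 := h6 t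
  push_cast at g5
  rw [e1]
  rw [abs_le] at *
  constructor <;> linarith

lemma h_mobius1 : ∃ C, ∀ t : ℚ, |logHeight₁ (1 / (1 - t)) - logHeight₁ t| ≤ C := by
  obtain ⟨C, h⟩ := h_add_const 1
  refine ⟨C, fun t ↦ ?_⟩
  have := h (-t)
  rw [logHeight₁_neg] at this
  rwa [one_div, logHeight₁_inv, show 1 - t = -t + 1 by ring]

lemma h_mobius2 : ∃ C, ∀ t : ℚ, t ≠ 0 → |logHeight₁ ((t - 1) / t) - logHeight₁ t| ≤ C := by
  obtain ⟨C, h⟩ := h_add_const 1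
  refine ⟨C, fun t ht ↦ ?_⟩
  have := h (-t⁻¹)
  rw [logHeight₁_neg, logHeight₁_inv] at this
  rwa [show (t - 1) / t = -t⁻¹ + 1 by field_simp; ring]

open MvPolynomial in
lemma h_double : ∃ C, ∀ z : ℚ, z ≠ 0 →
    |logHeight₁ ((z ^ 4 - 6 * z ^ 2 - 3) / (8 * z ^ 3)) - 4 * logHeight₁ z| ≤ C := by
  let p : Fin 2 → MvPolynomial (Fin 2) ℚ :=
    ![X 0 ^ 4 - C 6 * (X 0 ^ 2 * X 1 ^ 2) - C 3 * X 1 ^ 4, C 8 * (X 0 ^ 3 * X 1)]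
  let q : Fin 2 × Fin 2 → MvPolynomial (Fin 2) ℚ :=
    ![![X 0 ^ 3, C (3 / 4) * (X 0 ^ 2 * X 1) + C (3 / 8) * X 1 ^ 3],
      ![C (-1 / 3) * X 1 ^ 3 + C (2 / 3) * (X 0 ^ 2 * X 1),
        C (13 / 24) * (X 0 * X 1 ^ 2) - C (1 / 12) * X 0 ^ 3]].uncurry
  have hX (i : Fin 2) (n : ℕ) : (X i ^ n : MvPolynomial (Fin 2) ℚ).IsHomogeneous n :=
    isHomogeneous_X_pow ..
  have hX1 (i : Fin 2) : (X i : MvPolynomial (Fin 2) ℚ).IsHomogeneous 1 :=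
    isHomogeneous_X ..
  have hp : ∀ i, (p i).IsHomogeneous 4 := by
    intro i
    fin_cases i
    · exact ((hX 0 4).sub (((hX 0 2).mul (hX 1 2)).C_mul 6)).sub ((hX 1 4).C_mul 3)
    · exact ((hX 0 3).mul (hX1 1)).C_mul 8
  have hq : ∀ a, (q a).IsHomogeneous 3 := by
    rintro ⟨i, j⟩
    fin_cases i <;> fin_cases j
    · exact hX 0 3
    · exact (((hX 0 2).mul (hX1 1)).C_mul _).add ((hX 1 3).C_mul _)
    · exact ((hX 1 3).C_mul _).add (((hX 0 2).mul (hX1 1)).C_mul _)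
    · exact (((hX1 0).mul (hX 1 2)).C_mul _).sub ((hX 0 3).C_mul _)
  obtain ⟨C₁, hC₁⟩ := logHeight_eval_le' hp
  obtain ⟨C₂, hC₂⟩ := logHeight_eval_ge' (N := 4) hq
  refine ⟨max C₁ (-C₂), fun z hz ↦ ?_⟩
  have a1 := hC₁ ![z, 1]
  have a2 := hC₂ p (x := ![z, 1]) (by
    intro k
    fin_cases k <;> simp [p, q, Fin.sum_univ_two] <;> ring)
  have e : (fun j ↦ (p j).eval ![z, 1]) = ![z ^ 4 - 6 * z ^ 2 - 3, 8 * z ^ 3] := by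
    ext j
    fin_cases j <;> simp [p]
  rw [e, ← logHeight₁_eq_logHeight, ← logHeight₁_div_eq_logHeight] at a1 a2
  push_cast at a1 a2
  rw [abs_le]
  constructor
  · have := le_max_right C₁ (-C₂); linarith
  · have := le_max_left C₁ (-C₂); linarith

/-- The curve `y² = x³ - 432 d²`. -/
def Wd (d : ℚ) : Affine ℚ :=
  { a₁ := 0, a₂ := 0, a₃ := 0, a₄ := 0, a₆ := -432 * d ^ 2 }

lemma Wd_equation (d x y : ℚ) : (Wd d).Equation x y ↔ y ^ 2 = x ^ 3 - 432 * d ^ 2 := by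
  rw [Affine.equation_iff]
  simp [Wd]
  constructor <;> intro h <;> linarith

lemma Wd_elliptic {d : ℚ} (hd : d ≠ 0) : (Wd d).IsElliptic := by
  refine ⟨IsUnit.mk0 _ ?_⟩
  simp [Wd, WeierstrassCurve.Δ, WeierstrassCurve.b₂, WeierstrassCurve.b₄, WeierstrassCurve.b₆,
    WeierstrassCurve.b₈, hd]

lemma Wd_negY (d x y : ℚ) : (Wd d).negY x y = -y := by
  simp [Wd, Affine.negY]

lemma Wd_eq_of {d x y : ℚ} (h : (Wd d).Nonsingular x y) : y ^ 2 = x ^ 3 - 432 * d ^ 2 :=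
  (Wd_equation d x y).mp h.1

/-- secant addition -/
lemma Wd_add {d x₁ y₁ x₂ y₂ : ℚ} (h₁ : (Wd d).Nonsingular x₁ y₁) (h₂ : (Wd d).Nonsingular x₂ y₂)
    (hx : x₁ ≠ x₂) : ∃ h, Affine.Point.some x₁ y₁ h₁ + .some x₂ y₂ h₂ =
      .some (((y₁ - y₂) / (x₁ - x₂)) ^ 2 - x₁ - x₂)
        (-((y₁ - y₂) / (x₁ - x₂) * (((y₁ - y₂) / (x₁ - x₂)) ^ 2 - x₁ - x₂ - x₁) + y₁)) h := by
  have e1 : (Wd d).addX x₁ x₂ ((Wd d).slope x₁ x₂ y₁ y₂) =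
      ((y₁ - y₂) / (x₁ - x₂)) ^ 2 - x₁ - x₂ := by
    rw [Affine.slope_of_X_ne hx]; simp [Affine.addX, Wd]
  have e2 : (Wd d).addY x₁ x₂ y₁ ((Wd d).slope x₁ x₂ y₁ y₂) =
      -((y₁ - y₂) / (x₁ - x₂) * (((y₁ - y₂) / (x₁ - x₂)) ^ 2 - x₁ - x₂ - x₁) + y₁) := by
    rw [Affine.addY, Wd_negY, Affine.negAddY, e1, Affine.slope_of_X_ne hx]
  have := Affine.Point.add_of_X_ne (h₁ := h₁) (h₂ := h₂) hx
  simp only [e1, e2] at this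
  exact ⟨_, this⟩

/-- doubling -/
lemma Wd_double {d x y : ℚ} (h : (Wd d).Nonsingular x y) (hy : y ≠ 0) :
    ∃ h', Affine.Point.some x y h + .some x y h =
      .some ((3 * x ^ 2 / (2 * y)) ^ 2 - x - x)
        (-((3 * x ^ 2 / (2 * y)) * ((3 * x ^ 2 / (2 * y)) ^ 2 - x - x - x) + y)) h' := by
  have hy' : y ≠ (Wd d).negY x y := by
    rw [Wd_negY]; intro h; apply hy; linarith
  have es : (Wd d).slope x x y y = 3 * x ^ 2 / (2 * y) := by
    rw [Affine.slope_of_Y_ne rfl hy', Wd_negY]; simp [Wd]; ring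
  have e1 : (Wd d).addX x x ((Wd d).slope x x y y) = (3 * x ^ 2 / (2 * y)) ^ 2 - x - x := by
    rw [es]; simp [Affine.addX, Wd]
  have e2 : (Wd d).addY x x y ((Wd d).slope x x y y) =
      -((3 * x ^ 2 / (2 * y)) * ((3 * x ^ 2 / (2 * y)) ^ 2 - x - x - x) + y) := by
    rw [Affine.addY, Wd_negY, Affine.negAddY, e1, es]
  have := Affine.Point.add_self_of_Y_ne (h₁ := h) hy'
  simp only [e1, e2] at this
  exact ⟨_, this⟩

/-- twisted height -/
noncomputable def ht (d : ℚ) : (Wd d).Point → ℝ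
  | .zero => 0
  | .some _ y _ => logHeight₁ (y / (36 * d))

lemma ht_double : ∃ C, ∀ d : ℚ, d ≠ 0 → ∀ P : (Wd d).Point, |ht d (P + P) - 4 * ht d P| ≤ C := by
  obtain ⟨C, h⟩ := h_double
  have hC : 0 ≤ C := (abs_nonneg _).trans (h 1 one_ne_zero)
  refine ⟨C, fun d hd P ↦ ?_⟩
  match P with
  | .zero =>
    rw [← Affine.Point.zero_def, add_zero]
    simpa [Affine.Point.zero_def, ht] using hC
  | .some x y hP =>
    by_cases hy : y = 0
    · rw [Affine.Point.add_self_of_Y_eq (by rw [Wd_negY, hy]; ring)]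
      simpa [Affine.Point.zero_def, ht, hy] using hC
    · obtain ⟨h', e⟩ := Wd_double hP hy
      rw [e]
      simp only [ht]
      have eq := Wd_eq_of hP
      have := h (y / (36 * d)) (by positivity)
      convert this using 4
      have hx3 : x ^ 3 = y ^ 2 + 432 * d ^ 2 := by linarith
      field_simp
      ring_nf
      simp only [show x ^ 6 = (x ^ 3) ^ 2 by ring, hx3]
      ring

lemma ht_neg (d : ℚ) (P : (Wd d).Point) : ht d (-P) = ht d P := by
  match P with
  | .zero => rfl
  | .some x y hP =>
    simp only [Affine.Point.neg_some, ht, Wd_negY]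
    rw [neg_div, logHeight₁_neg]

lemma ht_naive {d : ℚ} (hd : d ≠ 0) :
    ∃ E, ∀ P : (Wd d).Point, |2 * ht d P - 3 * logHeight P.xRep| ≤ E := by
  obtain ⟨C1, h1⟩ := h_mul_const (36 * d) (by positivity)
  obtain ⟨C2, h2⟩ := h_add_const (432 * d ^ 2)
  have p1 : 0 ≤ C1 := (abs_nonneg _).trans (h1 1)
  have p2 : 0 ≤ C2 := (abs_nonneg _).trans (h2 1)
  refine ⟨2 * C1 + C2, fun P ↦ ?_⟩
  match P with
  | .zero =>
    rw [← Affine.Point.zero_def, Affine.Point.xRep_zero, ← logHeight₁_div_eq_logHeight]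
    simp [Affine.Point.zero_def, ht]
    positivity
  | .some x y hP =>
    rw [Affine.Point.xRep_some, ← logHeight₁_eq_logHeight]
    simp only [ht]
    have eq := Wd_eq_of hP
    have g1 := h1 (y / (36 * d))
    rw [mul_div_cancel₀ _ (by positivity)] at g1
    have g2 := h2 (y ^ 2)
    rw [show y ^ 2 + 432 * d ^ 2 = x ^ 3 by linarith, logHeight₁_pow, logHeight₁_pow] at g2
    push_cast at g2
    rw [abs_le] at *
    constructor <;> linarith

lemma sym2_prop {d : ℚ} (hd : d ≠ 0) (P Q : (Wd d).Point) : ∃ c : ℚ, c ≠ 0 ∧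
    (fun i ↦ (addSubMap (Wd d) i).eval (P.sym2x Q)) = c • (P + Q).sym2x (P - Q) := by
  have b2 : (Wd d).b₂ = 0 := by simp [Wd, WeierstrassCurve.b₂]
  have b4 : (Wd d).b₄ = 0 := by simp [Wd, WeierstrassCurve.b₄]
  have b6 : (Wd d).b₆ = -1728 * d ^ 2 := by simp [Wd, WeierstrassCurve.b₆]; ring
  have b8 : (Wd d).b₈ = 0 := by simp [Wd, WeierstrassCurve.b₈]
  have key (s t u : ℚ) : (fun i ↦ (addSubMap (Wd d) i).eval ![s, t, u]) =
      ![s ^ 2 + 1728 * d ^ 2 * t * u, 2 * t * s - 1728 * d ^ 2 * u ^ 2, t ^ 2 - 4 * s * u] := by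
    ext i
    fin_cases i <;> simp [addSubMap, b2, b4, b6, b8] <;> ring
  have dbl (x y : ℚ) (h : (Wd d).Nonsingular x y) : ∃ c : ℚ, c ≠ 0 ∧
      (fun i ↦ (addSubMap (Wd d) i).eval ![x * x, x + x, 1]) =
        c • (Affine.Point.some x y h + .some x y h).sym2x 0 := by
    have eq := Wd_eq_of h
    have hx3 : x ^ 3 = y ^ 2 + 432 * d ^ 2 := by linarith
    rw [key]
    by_cases hy : y = 0
    · have hx : x ≠ 0 := by
        rintro rfl
        rw [hy] at hx3
        have : d ^ 2 ≠ 0 := by positivity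
        apply this
        linarith
      refine ⟨9 * x ^ 4, by positivity, ?_⟩
      rw [Affine.Point.add_self_of_Y_eq (by rw [Wd_negY, hy]; ring), Affine.Point.sym2x_zero_zero]
      rw [hy] at hx3
      ext i
      fin_cases i
      · simp
        linear_combination (-8 * x) * hx3
      · simp
        linear_combination 4 * hx3
      · simp
        ring
    · refine ⟨4 * y ^ 2, by positivity, ?_⟩
      obtain ⟨h', e⟩ := Wd_double h hy
      rw [e, Affine.Point.sym2x_some_zero]
      ext i
      fin_cases i
      · simp
        field_simp
        linear_combination (-32 * x) * hx3
      · simp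
        linear_combination 4 * hx3
      · simp
        ring
  match P, Q with
  | .zero, .zero =>
    refine ⟨1, one_ne_zero, ?_⟩
    simp only [← Affine.Point.zero_def, add_zero, sub_zero, Affine.Point.sym2x_zero_zero, key]
    simp
  | .zero, .some x y h =>
    refine ⟨1, one_ne_zero, ?_⟩
    simp only [← Affine.Point.zero_def, zero_add, zero_sub, Affine.Point.sym2x_neg_right,
      Affine.Point.sym2x_zero_some, Affine.Point.sym2x_some_some, key]
    ext i
    fin_cases i <;> simp <;> ring
  | .some x y h, .zero =>
    refine ⟨1, one_ne_zero, ?_⟩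
    simp only [← Affine.Point.zero_def, add_zero, sub_zero,
      Affine.Point.sym2x_some_zero, Affine.Point.sym2x_some_some, key]
    ext i
    fin_cases i <;> simp <;> ring
  | .some x₁ y₁ h₁, .some x₂ y₂ h₂ =>
    by_cases hx : x₁ = x₂
    · have hPQ := (Affine.Point.X_eq_iff (h₁ := h₁) (h₂ := h₂)).mp hx
      subst hx
      rw [Affine.Point.sym2x_some_some]
      rcases hPQ with e | e
      · rw [← e, sub_self]
        exact dbl x₁ y₁ h₁
      · rw [show Affine.Point.some x₁ y₂ h₂ = -.some x₁ y₁ h₁ by rw [e, neg_neg], sub_neg_eq_add,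
          add_neg_cancel, Affine.Point.sym2x_comm]
        exact dbl x₁ y₁ h₁
    · rw [sub_eq_add_neg, Affine.Point.neg_some]
      have h₂' := (Affine.nonsingular_neg (W' := Wd d) x₂ y₂).mpr h₂
      have h₂'' : (Wd d).Nonsingular x₂ (-y₂) := by
        rw [← Wd_negY d x₂ y₂]
        exact h₂'
      have hn : (Affine.Point.some x₂ ((Wd d).negY x₂ y₂) h₂') =
        Affine.Point.some x₂ (-y₂) h₂'' := by
        congr 1
        exact Wd_negY ..
      rw [hn]
      obtain ⟨g1, e1⟩ := Wd_add h₁ h₂ hx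
      obtain ⟨g2, e2⟩ := Wd_add h₁ h₂'' hx
      rw [e1, e2, Affine.Point.sym2x_some_some, Affine.Point.sym2x_some_some, key]
      have hx' : x₁ - x₂ ≠ 0 := sub_ne_zero.mpr hx
      refine ⟨(x₁ - x₂) ^ 2, by positivity, ?_⟩
      have q1 := Wd_eq_of h₁
      have q2 := Wd_eq_of h₂
      ext i
      fin_cases i
      · simp
        field_simp
        have q1' : d ^ 2 * 432 = x₁ ^ 3 - y₁ ^ 2 := by linarith
        have q2' : y₂ ^ 2 = x₂ ^ 3 - x₁ ^ 3 + y₁ ^ 2 := by linarith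
        grind
      · simp
        field_simp
        grind
      · simp
        ring

lemma ht_parallelogram {d : ℚ} (hd : d ≠ 0) : ∃ D, ∀ P Q : (Wd d).Point,
    |ht d (P + Q) + ht d (P - Q) - 2 * ht d P - 2 * ht d Q| ≤ D := by
  haveI := Wd_elliptic hd
  obtain ⟨E, hE⟩ := ht_naive hd
  obtain ⟨C1, h1⟩ := abs_logHeight_addSubMap_sub_two_mul_logHeight_le (Wd d)
  obtain ⟨C2, h2⟩ := abs_logHeight_sym2_sub_le ℚ
  have hs (P Q : (Wd d).Point) :
      |logHeight (P.sym2x Q) - (logHeight P.xRep + logHeight Q.xRep)| ≤ C2 := by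
    have e (R : (Wd d).Point) : R.xRep = ![R.xRep 0, R.xRep 1] := by
      ext i; fin_cases i <;> rfl
    have hP := Affine.Point.xRep_ne_zero P
    have hQ := Affine.Point.xRep_ne_zero Q
    rw [e] at hP hQ
    have := h2 hP hQ
    rw [← e, ← e] at this
    exact this
  refine ⟨10 * (E + C1 + C2), fun P Q ↦ ?_⟩
  obtain ⟨c, hc, e⟩ := sym2_prop hd P Q
  have a1 := h1 (P.sym2x Q)
  rw [e, logHeight_smul_eq_logHeight _ hc] at a1
  have a2 := hs P Q
  have a3 := hs (P + Q) (P - Q)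
  have a4 := hE P
  have a5 := hE Q
  have a6 := hE (P + Q)
  have a7 := hE (P - Q)
  have p := (abs_nonneg _).trans a1
  have p' := (abs_nonneg _).trans a2
  have p'' := (abs_nonneg _).trans a4
  rw [abs_le] at *
  constructor <;> linarith

lemma Wd_nonsing {d x y : ℚ} (hd : d ≠ 0) (h : y ^ 2 = x ^ 3 - 432 * d ^ 2) :
    (Wd d).Nonsingular x y :=
  haveI := Wd_elliptic hd
  Affine.equation_iff_nonsingular.mp ((Wd_equation d x y).mpr h)

lemma main_aux : ∃ B : ℝ, ∀ t : ℚ, t ≠ 0 → t ≠ 1 → t ≠ 2 → B < logHeight₁ t →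
    2 ≤ Module.rank ℤ (Wd (k7 t)).Point := by
  obtain ⟨C, hC⟩ := ht_double
  obtain ⟨C0, h0⟩ := h_param
  obtain ⟨C1, h1⟩ := h_mobius1
  obtain ⟨C2, h2⟩ := h_mobius2
  have p1 := (abs_nonneg _).trans (h1 1)
  have p2 := (abs_nonneg _).trans (h2 1 one_ne_zero)
  refine ⟨5 * (C0 + 2 * C1 + 2 * C2 + C) / 2, fun t t0 t1 t2 hB ↦ ?_⟩
  have n1 : 3 * t ^ 2 - 3 * t + 1 ≠ 0 := by nlinarith [sq_nonneg (2 * t - 1)]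
  have n2 : t ^ 2 + t + 1 ≠ 0 := by nlinarith [sq_nonneg (2 * t + 1)]
  have n3 : t ^ 2 - 3 * t + 3 ≠ 0 := by nlinarith [sq_nonneg (2 * t - 3)]
  have hd : k7 t ≠ 0 := by
    unfold k7
    exact mul_ne_zero (mul_ne_zero (mul_ne_zero (by norm_num) n1) n2) n3
  have hk : k7 t = 63 * (3 * t ^ 2 - 3 * t + 1) * (t ^ 2 + t + 1) * (t ^ 2 - 3 * t + 3) := rfl
  obtain ⟨D, hD⟩ := ht_parallelogram hd
  set N1 := 3 * t ^ 2 - 3 * t + 1 with hN1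
  set N2 := t ^ 2 + t + 1 with hN2
  set N3 := t ^ 2 - 3 * t + 3 with hN3
  set d := k7 t
  have g1 : (Wd d).Nonsingular (4 * d / N1) (4 * d * (28 / N1 - 1)) := by
    apply Wd_nonsing hd
    field_simp
    rw [hk, hN1, hN2, hN3]
    ring
  have g2 : (Wd d).Nonsingular (4 * d / N2) (4 * d * (28 * (1 - t) ^ 2 / N2 - 1)) := by
    apply Wd_nonsing hd
    field_simp
    rw [hk, hN1, hN2, hN3]
    ring
  have g3 : (Wd d).Nonsingular (4 * d / N3) (4 * d * (28 * t ^ 2 / N3 - 1)) := by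
    apply Wd_nonsing hd
    field_simp
    rw [hk, hN1, hN2, hN3]
    ring
  have t2' : t - 2 ≠ 0 := sub_ne_zero.mpr t2
  have t1' : 1 - t ≠ 0 := sub_ne_zero.mpr t1.symm
  have hN : N2 - N1 ≠ 0 := by
    rw [hN1, hN2, show t ^ 2 + t + 1 - (3 * t ^ 2 - 3 * t + 1) = -2 * (t * (t - 2)) by ring]
    exact mul_ne_zero (by norm_num) (mul_ne_zero t0 t2')
  have hx : 4 * d / N1 ≠ 4 * d / N2 := by
    intro h
    apply hN
    field_simp at h
    linarith
  have hsl : (4 * d * (28 / N1 - 1) - 4 * d * (28 * (1 - t) ^ 2 / N2 - 1)) /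
      (4 * d / N1 - 4 * d / N2) = 42 * (t ^ 2 - t + 1) := by
    rw [div_eq_iff (sub_ne_zero.mpr hx)]
    field_simp
    rw [hN1, hN2]
    ring
  obtain ⟨g4, e⟩ := Wd_add g1 g2 hx
  have ex : (42 * (t ^ 2 - t + 1)) ^ 2 - 4 * d / N1 - 4 * d / N2 = 4 * d / N3 := by
    field_simp
    rw [hk, hN1, hN2, hN3]
    ring
  have ey : -(42 * (t ^ 2 - t + 1) * (4 * d / N3 - 4 * d / N1) + 4 * d * (28 / N1 - 1)) =
      -(4 * d * (28 * t ^ 2 / N3 - 1)) := by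
    field_simp
    rw [hN1, hN3]
    ring
  simp only [hsl, ex, ey] at e
  have f1 := h0 t
  have f2 := h0 (1 / (1 - t))
  have f3 := h0 ((t - 1) / t)
  have f4 := h1 t
  have f5 := h2 t t0
  refine indep_of_heights (ht d) C D (C0 + 2 * C1 + 2 * C2) (2 * logHeight₁ t) (hC d hd) hD
    (.some _ _ g1) (.some _ _ g2) ?_ ?_ ?_ (by linarith)
  · simp only [ht]
    rw [show 4 * d * (28 / N1 - 1) / (36 * d) = (28 / (3 * t ^ 2 - 3 * t + 1) - 1) / 9 by
      rw [← hN1]; field_simp; ring]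
    linarith
  · simp only [ht]
    rw [show 4 * d * (28 * (1 - t) ^ 2 / N2 - 1) / (36 * d) =
      (28 / (3 * (1 / (1 - t)) ^ 2 - 3 * (1 / (1 - t)) + 1) - 1) / 9 by
        rw [show 3 * (1 / (1 - t)) ^ 2 - 3 * (1 / (1 - t)) + 1 = N2 / (1 - t) ^ 2 by
          rw [hN2]; field_simp; ring]
        field_simp; ring]
    rw [abs_le] at *
    constructor <;> linarith
  · rw [e]
    simp only [ht]
    rw [neg_div, logHeight₁_neg, show 4 * d * (28 * t ^ 2 / N3 - 1) / (36 * d) =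
      (28 / (3 * ((t - 1) / t) ^ 2 - 3 * ((t - 1) / t) + 1) - 1) / 9 by
        rw [show 3 * ((t - 1) / t) ^ 2 - 3 * ((t - 1) / t) + 1 = N3 / t ^ 2 by
          rw [hN3]; field_simp; ring]
        field_simp; ring]
    rw [abs_le] at *
    constructor <;> linarith

end

/-- Corollary 1.2: for all but finitely many `t ∈ ℚ`, the curve `X³ + Y³ = k(t)` has
rank at least 2 over `ℚ`. -/
theorem rank_at_least_two_twists :
    {t : ℚ | ¬ 2 ≤ Module.rank ℤ (W7 t).Point}.Finite := by
  obtain ⟨B, hB⟩ := main_aux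
  have hfin : {t : ℚ | Height.logHeight₁ t ≤ B}.Finite := Northcott.finite_le B
  refine (hfin.union (Set.toFinite {0, 1, 2})).subset fun t ht ↦ ?_
  by_contra hcon
  simp only [Set.mem_union, Set.mem_ofPred_eq, Set.mem_insert_iff, Set.mem_singleton_iff,
    not_or, not_le] at hcon
  exact ht (hB t hcon.2.1 hcon.2.2.1 hcon.2.2.2 hcon.1)
end

section
/- Let S₂(X) denote the number of cube-free integers d with |d| ≤ X such that the elliptic curve W_d : y² = x³ − 432d² over ℚ has Mordell–Weil rank at least 2. Then S₂(X) ≫ X^{1/3}: there exist a constant c > 0 and X₀ such that S₂(X) ≥ c·X^{1/3} for all X ≥ X₀. -/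
open WeierstrassCurve

/-- An integer is cube-free if no prime cube divides it. -/
def Cubefree (d : ℤ) : Prop := ∀ p : ℤ, Prime p → ¬ p ^ 3 ∣ d

/-- The elliptic curve `W_d : y² = x³ - 432d²` over `ℚ`, isomorphic to `X³ + Y³ = d`. -/
def W12 (d : ℤ) : Affine ℚ :=
  { a₁ := 0, a₂ := 0, a₃ := 0, a₄ := 0, a₆ := -432 * (d : ℚ) ^ 2 }

/-- `S₂(X)`: the number of cube-free integers `d` with `|d| ≤ X` such that `W_d(ℚ)` has
rank at least 2. -/
noncomputable def S₂ (X : ℝ) : ℕ :=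
  {d : ℤ | Cubefree d ∧ (|d| : ℝ) ≤ X ∧ 2 ≤ Module.rank ℤ (W12 d).Point}.ncard


lemma W12_equation_iff (d : ℤ) (x y : ℚ) :
    (W12 d).Equation x y ↔ y ^ 2 = x ^ 3 - 432 * (d : ℚ) ^ 2 := by
  rw [WeierstrassCurve.Affine.equation_iff]
  simp [W12]
  constructor <;> intro h <;> linarith

lemma W12_nonsingular (d : ℤ) (hd : d ≠ 0) (x y : ℚ) (h : y ^ 2 = x ^ 3 - 432 * (d : ℚ) ^ 2) :
    (W12 d).Nonsingular x y := by
  rw [WeierstrassCurve.Affine.nonsingular_iff]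
  refine ⟨(W12_equation_iff d x y).2 h, ?_⟩
  simp only [W12]
  have hd' : (d : ℚ) ≠ 0 := by exact_mod_cast hd
  by_cases hx : x = 0
  · right
    intro hy
    have hy0 : y = 0 := by linarith
    subst hx hy0
    apply hd'
    have : (d : ℚ) ^ 2 = 0 := by linarith
    exact pow_eq_zero_iff (two_ne_zero) |>.1 this
  · left
    intro h0
    apply hx
    have : x ^ 2 = 0 := by linarith
    exact pow_eq_zero_iff (two_ne_zero) |>.1 this

/-- The descent map attached to a prime `p` and a square root `s` of `-3` in `ℚ_p`. -/
noncomputable def descFun (p : ℕ) [Fact p.Prime] (s : ℚ_[p]) (d : ℤ) : (W12 d).Point → ZMod 3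
  | .zero => 0
  | .some _ y _ => ((Padic.valuation ((y : ℚ_[p]) - 12 * (d : ℚ_[p]) * s) : ℤ) : ZMod 3)

lemma W12_factor_ne (p : ℕ) [Fact p.Prime] (s : ℚ_[p]) (hs : s ^ 2 = -3) (d : ℤ) (hd : d ≠ 0)
    (x y : ℚ) (h : y ^ 2 = x ^ 3 - 432 * (d : ℚ) ^ 2) :
    ((y : ℚ_[p]) - 12 * (d : ℚ_[p]) * s) ≠ 0 ∧ ((y : ℚ_[p]) + 12 * (d : ℚ_[p]) * s) ≠ 0 ∧
    ((y : ℚ_[p]) - 12 * (d : ℚ_[p]) * s) * ((y : ℚ_[p]) + 12 * (d : ℚ_[p]) * s) = (x : ℚ_[p]) ^ 3 := by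
  have hprod : ((y : ℚ_[p]) - 12 * (d : ℚ_[p]) * s) * ((y : ℚ_[p]) + 12 * (d : ℚ_[p]) * s) = (x : ℚ_[p]) ^ 3 := by
    have h' : (y : ℚ_[p]) ^ 2 = (x : ℚ_[p]) ^ 3 - 432 * (d : ℚ_[p]) ^ 2 := by exact_mod_cast h
    linear_combination h' - 144 * (d : ℚ_[p]) ^ 2 * hs
  have hx : (x : ℚ_[p]) ≠ 0 := by
    intro hx
    have hx' : x = 0 := by exact_mod_cast hx
    subst hx'
    have hd' : (d : ℚ) ≠ 0 := by exact_mod_cast hd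
    have := pow_pos (abs_pos.2 hd') 2
    rw [sq_abs] at this
    nlinarith [sq_nonneg y]
  have h3 := pow_ne_zero 3 hx
  rw [← hprod] at h3
  exact ⟨left_ne_zero_of_mul h3, right_ne_zero_of_mul h3, hprod⟩

lemma descFun_neg_aux (p : ℕ) [Fact p.Prime] (s : ℚ_[p]) (hs : s ^ 2 = -3) (d : ℤ) (hd : d ≠ 0)
    (x y : ℚ) (h : y ^ 2 = x ^ 3 - 432 * (d : ℚ) ^ 2) :
    ((Padic.valuation ((y : ℚ_[p]) - 12 * (d : ℚ_[p]) * s) : ℤ) : ZMod 3) +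
    ((Padic.valuation (((-y : ℚ) : ℚ_[p]) - 12 * (d : ℚ_[p]) * s) : ℤ) : ZMod 3) = 0 := by
  obtain ⟨h1, h2, h3⟩ := W12_factor_ne p s hs d hd x y h
  have h2' : (((-y : ℚ) : ℚ_[p]) - 12 * (d : ℚ_[p]) * s) ≠ 0 := by
    intro h0; apply h2; push_cast at h0; linear_combination -h0
  have hv := Padic.valuation_mul h1 h2'
  have : ((y : ℚ_[p]) - 12 * (d : ℚ_[p]) * s) * (((-y : ℚ) : ℚ_[p]) - 12 * (d : ℚ_[p]) * s) = (-(x : ℚ_[p])) ^ 3 := by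
    push_cast; linear_combination - h3
  rw [this, Padic.valuation_pow] at hv
  have := congrArg (fun z : ℤ => (z : ZMod 3)) hv
  push_cast at this ⊢
  rw [← this]
  have : (3 : ZMod 3) = 0 := by decide
  rw [this, zero_mul]

lemma descFun_line_aux (p : ℕ) [Fact p.Prime] (s : ℚ_[p]) (hs : s ^ 2 = -3) (d : ℤ) (hd : d ≠ 0)
    (x₁ y₁ x₂ y₂ x₃ y₃ l : ℚ) (h1 : y₁ ^ 2 = x₁ ^ 3 - 432 * (d : ℚ) ^ 2)
    (h2 : y₂ ^ 2 = x₂ ^ 3 - 432 * (d : ℚ) ^ 2) (h3 : y₃ ^ 2 = x₃ ^ 3 - 432 * (d : ℚ) ^ 2)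
    (hy2 : y₂ = l * (x₂ - x₁) + y₁) (hy3 : y₃ = l * (x₃ - x₁) + y₁)
    (hpoly : ∀ t : ℚ, t ^ 3 - 432 * (d : ℚ) ^ 2 - (l * (t - x₁) + y₁) ^ 2 =
      (t - x₁) * (t - x₂) * (t - x₃)) :
    ((Padic.valuation ((y₁ : ℚ_[p]) - 12 * (d : ℚ_[p]) * s) : ℤ) : ZMod 3) +
    ((Padic.valuation ((y₂ : ℚ_[p]) - 12 * (d : ℚ_[p]) * s) : ℤ) : ZMod 3) +
    ((Padic.valuation ((y₃ : ℚ_[p]) - 12 * (d : ℚ_[p]) * s) : ℤ) : ZMod 3) = 0 := by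
  obtain ⟨n1, -, -⟩ := W12_factor_ne p s hs d hd x₁ y₁ h1
  obtain ⟨n2, -, -⟩ := W12_factor_ne p s hs d hd x₂ y₂ h2
  obtain ⟨n3, -, -⟩ := W12_factor_ne p s hs d hd x₃ y₃ h3
  have hv := Padic.valuation_mul (mul_ne_zero n1 n2) n3
  rw [Padic.valuation_mul n1 n2] at hv
  have p0 := hpoly 0
  have p1 := hpoly 1
  have p2 := hpoly (-1)
  have e1 : x₁ + x₂ + x₃ = l ^ 2 := by linear_combination (p1 + p2 - 2 * p0) / 2
  have e3 : x₁ * x₂ * x₃ = (y₁ - l * x₁) ^ 2 + 432 * d ^ 2 := by linear_combination p0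
  have e2 : x₁ * x₂ + x₂ * x₃ + x₁ * x₃ = - 2 * l * (y₁ - l * x₁) := by
    linear_combination (-p1 + p2) / 2
  have e1' : (x₁ : ℚ_[p]) + x₂ + x₃ = l ^ 2 := by exact_mod_cast e1
  have e3' : (x₁ : ℚ_[p]) * x₂ * x₃ = (y₁ - l * x₁) ^ 2 + 432 * d ^ 2 := by exact_mod_cast e3
  have e2' : (x₁ : ℚ_[p]) * x₂ + x₂ * x₃ + x₁ * x₃ = - 2 * l * (y₁ - l * x₁) := by exact_mod_cast e2
  have : ((y₁ : ℚ_[p]) - 12 * (d : ℚ_[p]) * s) * ((y₂ : ℚ_[p]) - 12 * (d : ℚ_[p]) * s) * ((y₃ : ℚ_[p]) - 12 * (d : ℚ_[p]) * s)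
      = ((y₁ : ℚ_[p]) - l * x₁ - 12 * (d : ℚ_[p]) * s) ^ 3 := by
    rw [hy2, hy3]
    push_cast
    generalize (x₁ : ℚ_[p]) = X₁ at *
    generalize (x₂ : ℚ_[p]) = X₂ at *
    generalize (x₃ : ℚ_[p]) = X₃ at *
    generalize (y₁ : ℚ_[p]) = Y at *
    generalize (l : ℚ_[p]) = L at *
    generalize (d : ℚ_[p]) = D at *
    linear_combination L ^ 3 * e3' + L ^ 2 * (Y - L * X₁ - 12 * D * s) * e2' +
      L * (Y - L * X₁ - 12 * D * s) ^ 2 * e1' + L ^ 3 * 144 * D ^ 2 * hs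
  rw [this, Padic.valuation_pow] at hv
  have := congrArg (fun z : ℤ => (z : ZMod 3)) hv
  push_cast at this
  rw [← this]
  have : (3 : ZMod 3) = 0 := by decide
  rw [this, zero_mul]

lemma descFun_add (p : ℕ) [Fact p.Prime] (s : ℚ_[p]) (hs : s ^ 2 = -3) (d : ℤ) (hd : d ≠ 0)
    (P Q : (W12 d).Point) : descFun p s d (P + Q) = descFun p s d P + descFun p s d Q := by
  rcases P with _ | ⟨x₁, y₁, h₁⟩
  · change descFun p s d (0 + Q) = 0 + _
    rw [zero_add, zero_add]
  rcases Q with _ | ⟨x₂, y₂, h₂⟩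
  · change descFun p s d (_ + 0) = _ + 0
    rw [add_zero, add_zero]
  have q1 := (W12_equation_iff d x₁ y₁).1 h₁.1
  have q2 := (W12_equation_iff d x₂ y₂).1 h₂.1
  by_cases hxy : x₁ = x₂ ∧ y₁ = (W12 d).negY x₂ y₂
  · rw [WeierstrassCurve.Affine.Point.add_of_Y_eq hxy.1 hxy.2]
    have hy : y₁ = - y₂ := by rw [hxy.2]; simp [WeierstrassCurve.Affine.negY, W12]
    change 0 = ((Padic.valuation ((y₁ : ℚ_[p]) - 12 * (d : ℚ_[p]) * s) : ℤ) : ZMod 3) +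
      ((Padic.valuation ((y₂ : ℚ_[p]) - 12 * (d : ℚ_[p]) * s) : ℤ) : ZMod 3)
    rw [hy, add_comm]
    exact (descFun_neg_aux p s hs d hd x₂ y₂ q2).symm
  · rw [WeierstrassCurve.Affine.Point.add_some hxy]
    have hns := WeierstrassCurve.Affine.nonsingular_negAdd h₁ h₂ hxy
    have hpol := WeierstrassCurve.Affine.addPolynomial_slope h₁.1 h₂.1 hxy
    have q3 := (W12_equation_iff d _ _).1 hns.1
    have hsl : y₂ = (W12 d).slope x₁ x₂ y₁ y₂ * (x₂ - x₁) + y₁ := by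
      by_cases hx : x₁ = x₂
      · have := WeierstrassCurve.Affine.Y_eq_of_Y_ne h₁.1 h₂.1 hx (fun h => hxy ⟨hx, h⟩)
        rw [this, hx]; ring
      · rw [WeierstrassCurve.Affine.slope_of_X_ne hx]
        have : x₁ - x₂ ≠ 0 := sub_ne_zero.2 hx
        field_simp
        ring
    have key := descFun_line_aux p s hs d hd x₁ y₁ x₂ y₂ _ _ _ q1 q2 q3 hsl rfl (by
      intro t
      have := congrArg (Polynomial.eval t) hpol
      rw [WeierstrassCurve.Affine.addPolynomial, WeierstrassCurve.Affine.linePolynomial,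
        WeierstrassCurve.Affine.polynomial] at this
      simp [W12] at this ⊢
      linear_combination -this)
    have hneg := descFun_neg_aux p s hs d hd _ _ q3
    have hY : (W12 d).addY x₁ x₂ y₁ ((W12 d).slope x₁ x₂ y₁ y₂) =
        - (W12 d).negAddY x₁ x₂ y₁ ((W12 d).slope x₁ x₂ y₁ y₂) := by
      simp [WeierstrassCurve.Affine.addY, WeierstrassCurve.Affine.negY, W12]
    change ((Padic.valuation ((((W12 d).addY x₁ x₂ y₁ ((W12 d).slope x₁ x₂ y₁ y₂) : ℚ) : ℚ_[p])
      - 12 * (d : ℚ_[p]) * s) : ℤ) : ZMod 3) =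
      ((Padic.valuation ((y₁ : ℚ_[p]) - 12 * (d : ℚ_[p]) * s) : ℤ) : ZMod 3) +
      ((Padic.valuation ((y₂ : ℚ_[p]) - 12 * (d : ℚ_[p]) * s) : ℤ) : ZMod 3)
    rw [hY]
    linear_combination hneg - key

lemma W12_three_torsion (p : ℕ) [Fact p.Prime] (hp3 : p ≠ 3) (hp2 : p ≠ 2) (d : ℤ) (hd : d ≠ 0)
    (hv : ¬ 3 ∣ padicValInt p d) (R : (W12 d).Point) (hR : 3 • R = 0) : R = 0 := by
  rcases R with _ | ⟨x, y, h⟩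
  · rfl
  exfalso
  have q := (W12_equation_iff d x y).1 h.1
  have h2 : (WeierstrassCurve.Affine.Point.some x y h) + (WeierstrassCurve.Affine.Point.some x y h)
      = - (WeierstrassCurve.Affine.Point.some x y h) := by
    rw [← add_eq_zero_iff_eq_neg, ← hR]; abel
  have hd' : (d : ℚ) ≠ 0 := by exact_mod_cast hd
  by_cases hy : y = (W12 d).negY x y
  · rw [WeierstrassCurve.Affine.Point.add_self_of_Y_eq hy] at h2
    have := WeierstrassCurve.Affine.Point.some_ne_zero h
    exact this (neg_eq_zero.1 h2.symm)
  · rw [WeierstrassCurve.Affine.Point.add_self_of_Y_ne hy, WeierstrassCurve.Affine.Point.neg_some]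
      at h2
    have hX := (WeierstrassCurve.Affine.Point.some.inj h2).1
    rw [WeierstrassCurve.Affine.slope_of_Y_ne rfl hy] at hX
    simp only [WeierstrassCurve.Affine.addX, WeierstrassCurve.Affine.negY, W12] at hX hy
    have hy0 : y ≠ 0 := by
      intro h0; apply hy; rw [h0]; ring
    have h2y : y - (-y - 0 * x - 0) ≠ 0 := by
      intro h0; apply hy0; linarith
    have h2y' : y - (-y - 0 * x - 0) = 2 * y := by ring
    rw [h2y'] at hX
    have hX' : (3 * x ^ 2 / (2 * y)) ^ 2 = 3 * x := by
      have e : (3 * x ^ 2 + 2 * 0 * x + 0 - 0 * y) = 3 * x ^ 2 := by ring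
      rw [e] at hX
      linarith
    rw [div_pow, div_eq_iff (by positivity)] at hX'
    have hx0 : x ≠ 0 := by
      rintro rfl
      have : 0 < (d : ℚ) ^ 2 := by positivity
      nlinarith [sq_nonneg y]
    have hxx : x * (x ^ 3 - 1728 * (d : ℚ) ^ 2) = 0 := by
      have h9 : 9 * x ^ 4 = 12 * x * y ^ 2 := by
        linear_combination hX'
      rw [q] at h9; linarith
    have hxc : x ^ 3 = 1728 * (d : ℚ) ^ 2 := by
      rcases mul_eq_zero.1 hxx with h0 | h0
      · exact absurd h0 hx0
      · linarith
    have hval := congrArg (padicValRat p) hxc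
    rw [padicValRat.pow, padicValRat.mul (by norm_num) (pow_ne_zero 2 hd'), padicValRat.pow,
      padicValRat.of_int] at hval
    have h1728 : padicValRat p (1728 : ℚ) = 0 := by
      have : (1728 : ℚ) = ((1728 : ℕ) : ℚ) := by norm_num
      rw [this, padicValRat.of_nat, padicValNat.eq_zero_of_not_dvd]; rfl
      intro hdiv
      have : (1728 : ℕ) = 2 ^ 6 * 3 ^ 3 := by norm_num
      rw [this, (Fact.out : p.Prime).dvd_mul] at hdiv
      rcases hdiv with h | h
      · exact hp2 ((Nat.prime_dvd_prime_iff_eq Fact.out Nat.prime_two).1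
          ((Fact.out : p.Prime).dvd_of_dvd_pow h))
      · exact hp3 ((Nat.prime_dvd_prime_iff_eq Fact.out Nat.prime_three).1
          ((Fact.out : p.Prime).dvd_of_dvd_pow h))
    rw [h1728] at hval
    apply hv
    push_cast at hval
    omega

lemma rank_ge_two_of_homs {G : Type} [AddCommGroup G] (h₁ h₂ : G →+ ZMod 3) (P Q : G)
    (h1P : h₁ P ≠ 0) (h1Q : h₁ Q = 0) (h2P : h₂ P = 0) (h2Q : h₂ Q ≠ 0)
    (htor : ∀ R : G, 3 • R = 0 → R = 0) : 2 ≤ Module.rank ℤ G := by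
  have hz : ∀ (n : ℤ) (x : ZMod 3), x ≠ 0 → n • x = 0 → (3 : ℤ) ∣ n := by
    intro n x hx hn
    rw [zsmul_eq_mul] at hn
    rcases mul_eq_zero.1 hn with h | h
    · exact (ZMod.intCast_zmod_eq_zero_iff_dvd n 3).1 h
    · exact absurd h hx
  have key : ∀ (k : ℕ) (n m : ℤ), n.natAbs + m.natAbs ≤ k → n • P + m • Q = 0 → n = 0 ∧ m = 0 := by
    intro k
    induction k with
    | zero => intro n m h _; omega
    | succ k ih =>
      intro n m hk hnm
      have a1 := congrArg h₁ hnm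
      have a2 := congrArg h₂ hnm
      rw [map_add, map_zsmul, map_zsmul, map_zero, h1Q, smul_zero, add_zero] at a1
      rw [map_add, map_zsmul, map_zsmul, map_zero, h2P, smul_zero, zero_add] at a2
      obtain ⟨n', rfl⟩ := hz _ _ h1P a1
      obtain ⟨m', rfl⟩ := hz _ _ h2Q a2
      have h0 : n' • P + m' • Q = 0 := by
        apply htor
        rw [← hnm]
        rw [smul_add, ← natCast_zsmul, ← natCast_zsmul, smul_smul, smul_smul]
        rfl
      by_cases hzero : n' = 0 ∧ m' = 0
      · simp [hzero.1, hzero.2]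
      · have := ih n' m' (by omega) h0
        exact absurd this hzero
  have hli : LinearIndependent ℤ ![P, Q] := by
    rw [LinearIndependent.pair_iff]
    intro n m h
    exact key _ n m le_rfl h
  have := hli.cardinal_le_rank
  simpa using this

lemma exists_sqrt_neg_three (p : ℕ) [hp : Fact p.Prime] (hp2 : p ≠ 2) (hp3 : p ≠ 3) (x y : ℤ)
    (hy : ¬ (p : ℤ) ∣ y) (h : (p : ℤ) ∣ x ^ 2 + x * y + y ^ 2) : ∃ s : ℚ_[p], s ^ 2 = -3 := by
  have hpi : Prime (p : ℤ) := Nat.prime_iff_prime_int.1 hp.out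
  have h2 : ¬ (p : ℤ) ∣ 2 := by
    intro h; exact hp2 ((Nat.prime_dvd_prime_iff_eq hp.out Nat.prime_two).1 (by exact_mod_cast h))
  have h3 : ¬ (p : ℤ) ∣ 3 := by
    intro h; exact hp3 ((Nat.prime_dvd_prime_iff_eq hp.out Nat.prime_three).1 (by exact_mod_cast h))
  have hu : ¬ (p : ℤ) ∣ 2 * x + y := by
    intro hd
    have : (p : ℤ) ∣ 3 * y ^ 2 := by
      have e : 3 * y ^ 2 = 4 * (x ^ 2 + x * y + y ^ 2) - (2 * x + y) * (2 * x + y) := by ring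
      rw [e]
      exact dvd_sub (Dvd.dvd.mul_left h _) (Dvd.dvd.mul_left hd _)
    rcases hpi.dvd_or_dvd this with h | h
    · exact h3 h
    · exact hy (hpi.dvd_of_dvd_pow h)
  let F : Polynomial ℤ_[p] := Polynomial.X ^ 2 + Polynomial.C (3 * (y : ℤ_[p]) ^ 2)
  have hF : ∀ z : ℤ_[p], F.aeval z = z ^ 2 + 3 * (y : ℤ_[p]) ^ 2 := by
    intro z; simp [F]
  have hF' : ∀ z : ℤ_[p], F.derivative.aeval z = 2 * z := by
    intro z
    have : F.derivative = Polynomial.C 2 * Polynomial.X := by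
      simp only [F, Polynomial.derivative_add, Polynomial.derivative_C, Polynomial.derivative_X_pow]
      simp
    rw [this]; simp
  have hn' : ‖F.derivative.aeval ((2 * x + y : ℤ) : ℤ_[p])‖ = 1 := by
    rw [hF']
    have : (2 * ((2 * x + y : ℤ) : ℤ_[p])) = ((2 * (2 * x + y) : ℤ) : ℤ_[p]) := by push_cast; ring
    rw [this]
    apply le_antisymm (PadicInt.norm_le_one _)
    rw [← not_lt, PadicInt.norm_int_lt_one_iff_dvd]
    intro h
    rcases hpi.dvd_or_dvd h with h | h
    · exact h2 h
    · exact hu h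
  obtain ⟨z, hz, -⟩ := hensels_lemma (p := p) (F := F) (a := ((2 * x + y : ℤ) : ℤ_[p])) (by
    rw [hn', hF]
    have : ((2 * x + y : ℤ) : ℤ_[p]) ^ 2 + 3 * (y : ℤ_[p]) ^ 2 =
      ((4 * (x ^ 2 + x * y + y ^ 2) : ℤ) : ℤ_[p]) := by push_cast; ring
    rw [this, one_pow, PadicInt.norm_int_lt_one_iff_dvd]
    exact Dvd.dvd.mul_left h _)
  rw [hF] at hz
  have hz' : (z : ℚ_[p]) ^ 2 + 3 * (y : ℚ_[p]) ^ 2 = 0 := by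
    have := congrArg (fun t : ℤ_[p] => (t : ℚ_[p])) hz
    push_cast at this
    exact this
  have hy0 : (y : ℚ_[p]) ≠ 0 := by
    intro h0
    apply hy
    have : y = 0 := by exact_mod_cast h0
    simp [this]
  refine ⟨(z : ℚ_[p]) / y, ?_⟩
  rw [div_pow, div_eq_iff (pow_ne_zero 2 hy0)]
  linear_combination hz'

lemma val_int_eq_zero (p : ℕ) [hp : Fact p.Prime] (n : ℤ) (h : ¬ (p : ℤ) ∣ n) :
    Padic.valuation (n : ℚ_[p]) = 0 := by
  rw [Padic.valuation_intCast, padicValInt.eq_zero_of_not_dvd h]; rfl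

/-- Valuations of the two conjugate factors. -/
lemma factor_valuations (p : ℕ) [hp : Fact p.Prime] (hp2 : p ≠ 2) (hp3 : p ≠ 3)
    (s : ℚ_[p]) (hs : s ^ 2 = -3) (X Y n : ℤ) (hn : n = X ^ 2 - X * Y + Y ^ 2) (hn0 : n ≠ 0) :
    (¬ (p : ℤ) ∣ n → Padic.valuation (((3 * (X - Y) : ℤ) : ℚ_[p]) - s * ((X + Y : ℤ) : ℚ_[p])) = 0) ∧
    (¬ (p : ℤ) ∣ X + Y →
      Padic.valuation (((3 * (X - Y) : ℤ) : ℚ_[p]) - s * ((X + Y : ℤ) : ℚ_[p])) = 0 ∨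
      Padic.valuation (((3 * (X - Y) : ℤ) : ℚ_[p]) - s * ((X + Y : ℤ) : ℚ_[p])) = padicValInt p n) ∧
    (((3 * (X - Y) : ℤ) : ℚ_[p]) - s * ((X + Y : ℤ) : ℚ_[p])) ≠ 0 := by
  have hpi : Prime (p : ℤ) := Nat.prime_iff_prime_int.1 hp.out
  have h2 : ¬ (p : ℤ) ∣ 2 := by
    intro h; exact hp2 ((Nat.prime_dvd_prime_iff_eq hp.out Nat.prime_two).1 (by exact_mod_cast h))
  have h3 : ¬ (p : ℤ) ∣ 3 := by
    intro h; exact hp3 ((Nat.prime_dvd_prime_iff_eq hp.out Nat.prime_three).1 (by exact_mod_cast h))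
  have h12 : ¬ (p : ℤ) ∣ 12 := by
    intro h
    have e : (12 : ℤ) = 2 * (2 * 3) := by norm_num
    rw [e] at h
    rcases hpi.dvd_or_dvd h with h | h
    · exact h2 h
    · rcases hpi.dvd_or_dvd h with h | h
      · exact h2 h
      · exact h3 h
  set A : ℚ_[p] := ((3 * (X - Y) : ℤ) : ℚ_[p]) - s * ((X + Y : ℤ) : ℚ_[p]) with hA
  set B : ℚ_[p] := ((3 * (X - Y) : ℤ) : ℚ_[p]) + s * ((X + Y : ℤ) : ℚ_[p]) with hB
  have hAB : A * B = ((12 * n : ℤ) : ℚ_[p]) := by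
    rw [hA, hB, hn]; push_cast; linear_combination -((X : ℚ_[p]) + Y) ^ 2 * hs
  have hAB0 : A * B ≠ 0 := by
    rw [hAB]; exact_mod_cast mul_ne_zero (by norm_num) hn0
  have hA0 := left_ne_zero_of_mul hAB0
  have hB0 := right_ne_zero_of_mul hAB0
  have hs0 : s ≠ 0 := by rintro rfl; norm_num at hs
  have hsv : Padic.valuation s = 0 := by
    have := congrArg Padic.valuation hs
    rw [Padic.valuation_pow] at this
    have e : (-3 : ℚ_[p]) = ((-3 : ℤ) : ℚ_[p]) := by norm_num
    rw [e, val_int_eq_zero p (-3) (by rwa [dvd_neg])] at this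
    simpa using this
  have hsn : ‖s‖ ≤ 1 := by rw [Padic.norm_le_one_iff_val_nonneg, hsv]
  have hsX : ‖s * ((X + Y : ℤ) : ℚ_[p])‖ ≤ 1 := by
    rw [norm_mul]
    exact mul_le_one₀ hsn (norm_nonneg _) (Padic.norm_int_le_one _)
  have hAv : 0 ≤ Padic.valuation A := by
    rw [← Padic.norm_le_one_iff_val_nonneg, hA]
    rw [sub_eq_add_neg]
    exact (Padic.nonarchimedean _ _).trans (max_le (Padic.norm_int_le_one _)
      (by rw [norm_neg]; exact hsX))
  have hBv : 0 ≤ Padic.valuation B := by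
    rw [← Padic.norm_le_one_iff_val_nonneg, hB]
    exact (Padic.nonarchimedean _ _).trans (max_le (Padic.norm_int_le_one _) hsX)
  have hsum : Padic.valuation A + Padic.valuation B = padicValInt p n := by
    rw [← Padic.valuation_mul hA0 hB0, hAB]
    push_cast
    rw [Padic.valuation_mul (by norm_num) (by exact_mod_cast hn0), Padic.valuation_intCast]
    have := val_int_eq_zero p 12 h12
    push_cast at this
    rw [this, zero_add]
  refine ⟨?_, ?_, hA0⟩
  · intro h
    rw [padicValInt.eq_zero_of_not_dvd h] at hsum
    push_cast at hsum
    omega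
  · intro h
    have hXY0 : ((X + Y : ℤ) : ℚ_[p]) ≠ 0 := by
      intro h0
      apply h
      have : X + Y = 0 := by exact_mod_cast h0
      simp [this]
    have e : B + -A = ((2 : ℤ) : ℚ_[p]) * (s * ((X + Y : ℤ) : ℚ_[p])) := by
      rw [hA, hB]; push_cast; ring
    have hne : B + -A ≠ 0 := by
      rw [e]; exact mul_ne_zero (by norm_num) (mul_ne_zero hs0 hXY0)
    have hval : Padic.valuation (B + -A) = 0 := by
      rw [e, Padic.valuation_mul (by norm_num) (mul_ne_zero hs0 hXY0),
        Padic.valuation_mul hs0 hXY0, hsv, val_int_eq_zero p _ h, val_int_eq_zero p _ h2]; rfl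
    have hneg : Padic.valuation (-A) = Padic.valuation A := by
      have : -A = ((-1 : ℤ) : ℚ_[p]) * A := by push_cast; ring
      rw [this, Padic.valuation_mul (by norm_num) hA0, Padic.valuation_intCast]
      simp [padicValInt]
    have := Padic.le_valuation_add hne
    rw [hval, hneg] at this
    rcases min_le_iff.1 this with h | h
    · right; omega
    · left; omega

/-- The point on `W_d` coming from `X³ + Y³ = d`, where `n = X² - XY + Y²`. -/
lemma pt_equation (X Y n d : ℤ) (hn : n = X ^ 2 - X * Y + Y ^ 2) (hd : d = (X + Y) * n) :
    ((36 * (X - Y) * n : ℤ) : ℚ) ^ 2 = ((12 * n : ℤ) : ℚ) ^ 3 - 432 * (d : ℚ) ^ 2 := by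
  subst hd hn
  push_cast; ring

lemma pt_desc_val (p : ℕ) [hp : Fact p.Prime] (hp2 : p ≠ 2) (hp3 : p ≠ 3)
    (s : ℚ_[p]) (hs : s ^ 2 = -3) (X Y n d : ℤ) (hn : n = X ^ 2 - X * Y + Y ^ 2)
    (hd : d = (X + Y) * n) (hn0 : n ≠ 0) (h : (W12 d).Nonsingular (12 * n : ℤ) (36 * (X - Y) * n : ℤ)) :
    (¬ (p : ℤ) ∣ n → descFun p s d (.some _ _ h) = 0) ∧
    (¬ (p : ℤ) ∣ X + Y → ¬ 3 ∣ padicValInt p n → descFun p s d (.some _ _ h) ≠ 0) := by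
  obtain ⟨f1, f2, f3⟩ := factor_valuations p hp2 hp3 s hs X Y n hn hn0
  have hpi : Prime (p : ℤ) := Nat.prime_iff_prime_int.1 hp.out
  have h2 : ¬ (p : ℤ) ∣ 2 := by
    intro h; exact hp2 ((Nat.prime_dvd_prime_iff_eq hp.out Nat.prime_two).1 (by exact_mod_cast h))
  have h3 : ¬ (p : ℤ) ∣ 3 := by
    intro h; exact hp3 ((Nat.prime_dvd_prime_iff_eq hp.out Nat.prime_three).1 (by exact_mod_cast h))
  have h12 : ¬ (p : ℤ) ∣ 12 := by
    intro h
    have e : (12 : ℤ) = 2 * (2 * 3) := by norm_num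
    rw [e] at h
    rcases hpi.dvd_or_dvd h with h | h
    · exact h2 h
    · rcases hpi.dvd_or_dvd h with h | h
      · exact h2 h
      · exact h3 h
  have hval : descFun p s d (.some _ _ h) = (((padicValInt p n : ℤ) +
      Padic.valuation (((3 * (X - Y) : ℤ) : ℚ_[p]) - s * ((X + Y : ℤ) : ℚ_[p])) : ℤ) : ZMod 3) := by
    change ((Padic.valuation ((((36 * (X - Y) * n : ℤ) : ℚ) : ℚ_[p]) - 12 * (d : ℚ_[p]) * s) : ℤ) : ZMod 3)
      = _
    have e : (((36 * (X - Y) * n : ℤ) : ℚ) : ℚ_[p]) - 12 * (d : ℚ_[p]) * s =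
      ((12 : ℤ) : ℚ_[p]) * ((n : ℚ_[p]) * (((3 * (X - Y) : ℤ) : ℚ_[p]) - s * ((X + Y : ℤ) : ℚ_[p]))) := by
      rw [hd]; push_cast; ring
    have hn0' : (n : ℚ_[p]) ≠ 0 := by exact_mod_cast hn0
    rw [e, Padic.valuation_mul (by norm_num) (mul_ne_zero hn0' f3), Padic.valuation_mul hn0' f3,
      val_int_eq_zero p 12 h12, Padic.valuation_intCast, zero_add]
  constructor
  · intro h
    rw [hval, f1 h, padicValInt.eq_zero_of_not_dvd h]; rfl
  · intro h hv h0
    rw [hval, ZMod.intCast_zmod_eq_zero_iff_dvd] at h0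
    rcases f2 h with h | h <;> rw [h] at h0 <;> omega

/-- Rank at least two from two representations as a sum of two cubes. -/
lemma rank_ge_two (d X Y n X' Y' n' : ℤ) (hd0 : d ≠ 0)
    (hn : n = X ^ 2 - X * Y + Y ^ 2) (hd : d = (X + Y) * n)
    (hn' : n' = X' ^ 2 - X' * Y' + Y' ^ 2) (hd' : d = (X' + Y') * n')
    (p q : ℕ) (hp : p.Prime) (hq : q.Prime) (hp2 : p ≠ 2) (hp3 : p ≠ 3) (hq2 : q ≠ 2) (hq3 : q ≠ 3)
    (hps : ∃ x y : ℤ, ¬ (p : ℤ) ∣ y ∧ (p : ℤ) ∣ x ^ 2 + x * y + y ^ 2)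
    (hqs : ∃ x y : ℤ, ¬ (q : ℤ) ∣ y ∧ (q : ℤ) ∣ x ^ 2 + x * y + y ^ 2)
    (hp1 : ¬ (p : ℤ) ∣ X + Y) (hpn : ¬ 3 ∣ padicValInt p n) (hpn' : ¬ (p : ℤ) ∣ n')
    (hq1 : ¬ (q : ℤ) ∣ X' + Y') (hqn' : ¬ 3 ∣ padicValInt q n') (hqn : ¬ (q : ℤ) ∣ n) :
    2 ≤ Module.rank ℤ (W12 d).Point := by
  have : Fact p.Prime := ⟨hp⟩
  have : Fact q.Prime := ⟨hq⟩
  obtain ⟨x, y, hy, hxy⟩ := hps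
  obtain ⟨s, hs⟩ := exists_sqrt_neg_three p hp2 hp3 x y hy hxy
  obtain ⟨x', y', hy', hxy'⟩ := hqs
  obtain ⟨t, ht⟩ := exists_sqrt_neg_three q hq2 hq3 x' y' hy' hxy'
  have hn0 : n ≠ 0 := by rintro rfl; simp at hd; exact hd0 hd
  have hn0' : n' ≠ 0 := by rintro rfl; simp at hd'; exact hd0 hd'
  have ns := W12_nonsingular d hd0 _ _ (pt_equation X Y n d hn hd)
  have ns' := W12_nonsingular d hd0 _ _ (pt_equation X' Y' n' d hn' hd')
  have v1 := pt_desc_val p hp2 hp3 s hs X Y n d hn hd hn0 ns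
  have v2 := pt_desc_val p hp2 hp3 s hs X' Y' n' d hn' hd' hn0' ns'
  have v3 := pt_desc_val q hq2 hq3 t ht X Y n d hn hd hn0 ns
  have v4 := pt_desc_val q hq2 hq3 t ht X' Y' n' d hn' hd' hn0' ns'
  refine rank_ge_two_of_homs (AddMonoidHom.mk' (descFun p s d) (descFun_add p s hs d hd0))
    (AddMonoidHom.mk' (descFun q t d) (descFun_add q t ht d hd0)) (.some _ _ ns) (.some _ _ ns')
    (v1.2 hp1 hpn) (v2.1 hpn') (v3.1 hqn) (v4.2 hq1 hqn') ?_
  refine W12_three_torsion p hp3 hp2 d hd0 ?_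
  rw [hd, padicValInt.mul (by rintro h; rw [h] at hp1; simp at hp1) hn0,
    padicValInt.eq_zero_of_not_dvd hp1, zero_add]
  exact hpn

/-- First quadratic factor. -/
def G1 (a b : ℤ) : ℤ := 3 * a ^ 2 - 3 * a * b + b ^ 2
/-- Second quadratic factor. -/
def G2 (a b : ℤ) : ℤ := a ^ 2 + a * b + b ^ 2
/-- Third quadratic factor. -/
def G3 (a b : ℤ) : ℤ := a ^ 2 - 3 * a * b + 3 * b ^ 2
/-- The binary sextic form (without the constant 63). -/
def GG (a b : ℤ) : ℤ := G1 a b * G2 a b * G3 a b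

/-- Admissible pairs. -/
def Adm (a b : ℤ) : Prop :=
  IsCoprime a b ∧ ¬ (2 : ℤ) ∣ GG a b ∧ ¬ (3 : ℤ) ∣ GG a b ∧ ¬ (7 : ℤ) ∣ GG a b ∧
  (∀ p : ℕ, p.Prime → ¬ (p : ℤ) ^ 3 ∣ G1 a b ∧ ¬ (p : ℤ) ^ 3 ∣ G2 a b ∧ ¬ (p : ℤ) ^ 3 ∣ G3 a b) ∧
  1 < G1 a b ∧ 1 < G3 a b

lemma not_dvd_both {p a b : ℤ} (hp : Prime p) (hab : IsCoprime a b) : ¬ (p ∣ a ∧ p ∣ b) := by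
  rintro ⟨h1, h2⟩
  exact hp.not_isUnit (hab.isUnit_of_dvd' h1 h2)

lemma not_dvd_of_dvd_G1 {p a b : ℤ} (hp : Prime p) (hab : IsCoprime a b)
    (h : p ∣ G1 a b) : ¬ p ∣ a := by
  intro ha
  refine not_dvd_both hp hab ⟨ha, hp.dvd_of_dvd_pow (n := 2) ?_⟩
  have : b ^ 2 = G1 a b - a * (3 * a - 3 * b) := by unfold G1; ring
  rw [this]
  exact dvd_sub h (Dvd.dvd.mul_right ha _)

lemma not_dvd_of_dvd_G2 {p a b : ℤ} (hp : Prime p) (hab : IsCoprime a b)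
    (h : p ∣ G2 a b) : ¬ p ∣ a ∧ ¬ p ∣ b := by
  constructor
  · intro ha
    refine not_dvd_both hp hab ⟨ha, hp.dvd_of_dvd_pow (n := 2) ?_⟩
    have : b ^ 2 = G2 a b - a * (a + b) := by unfold G2; ring
    rw [this]
    exact dvd_sub h (Dvd.dvd.mul_right ha _)
  · intro ha
    refine not_dvd_both hp hab ⟨hp.dvd_of_dvd_pow (n := 2) ?_, ha⟩
    have : a ^ 2 = G2 a b - b * (a + b) := by unfold G2; ring
    rw [this]
    exact dvd_sub h (Dvd.dvd.mul_right ha _)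

lemma not_dvd_of_dvd_G3 {p a b : ℤ} (hp : Prime p) (hab : IsCoprime a b)
    (h : p ∣ G3 a b) : ¬ p ∣ b := by
  intro ha
  refine not_dvd_both hp hab ⟨hp.dvd_of_dvd_pow (n := 2) ?_, ha⟩
  have : a ^ 2 = G3 a b - b * (3 * b - 3 * a) := by unfold G3; ring
  rw [this]
  exact dvd_sub h (Dvd.dvd.mul_right ha _)

lemma not_dvd_G1_G2 {p a b : ℤ} (hp : Prime p) (hab : IsCoprime a b) (h2 : ¬ p ∣ 2) (h7 : ¬ p ∣ 7)
    (h : p ∣ G1 a b) (h' : p ∣ G2 a b) : False := by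
  have ha := not_dvd_of_dvd_G1 hp hab h
  have hb := (not_dvd_of_dvd_G2 hp hab h').2
  have e : p ∣ 2 * (a * (a - 2 * b)) := by
    have : 2 * (a * (a - 2 * b)) = G1 a b - G2 a b := by unfold G1 G2; ring
    rw [this]; exact dvd_sub h h'
  rcases hp.dvd_or_dvd e with e | e
  · exact h2 e
  rcases hp.dvd_or_dvd e with e | e
  · exact ha e
  have e7 : p ∣ 7 * b ^ 2 := by
    have : 7 * b ^ 2 = G2 a b - (a - 2 * b) * (a + 3 * b) := by unfold G2; ring
    rw [this]; exact dvd_sub h' (Dvd.dvd.mul_right e _)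
  rcases hp.dvd_or_dvd e7 with e | e
  · exact h7 e
  · exact hb (hp.dvd_of_dvd_pow e)

lemma G_swap (a b : ℤ) : G1 b a = G3 a b ∧ G2 b a = G2 a b ∧ G3 b a = G1 a b := by
  unfold G1 G2 G3; refine ⟨?_, ?_, ?_⟩ <;> ring

lemma not_dvd_G3_G2 {p a b : ℤ} (hp : Prime p) (hab : IsCoprime a b) (h2 : ¬ p ∣ 2) (h7 : ¬ p ∣ 7)
    (h : p ∣ G3 a b) (h' : p ∣ G2 a b) : False := by
  obtain ⟨s1, s2, s3⟩ := G_swap a b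
  rw [← s1] at h
  rw [← s2] at h'
  exact not_dvd_G1_G2 hp hab.symm h2 h7 h h'

lemma not_dvd_G1_G3 {p a b : ℤ} (hp : Prime p) (hab : IsCoprime a b) (h2 : ¬ p ∣ 2) (h7 : ¬ p ∣ 7)
    (h : p ∣ G1 a b) (h' : p ∣ G3 a b) : False := by
  have ha := not_dvd_of_dvd_G1 hp hab h
  have e : p ∣ 2 * ((a - b) * (a + b)) := by
    have : 2 * ((a - b) * (a + b)) = G1 a b - G3 a b := by unfold G1 G3; ring
    rw [this]; exact dvd_sub h h'
  rcases hp.dvd_or_dvd e with e | e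
  · exact h2 e
  rcases hp.dvd_or_dvd e with e | e
  · apply ha
    apply hp.dvd_of_dvd_pow (n := 2)
    have : a ^ 2 = G1 a b - (a - b) * (2 * a - b) := by unfold G1; ring
    rw [this]; exact dvd_sub h (Dvd.dvd.mul_right e _)
  · have e7 : p ∣ 7 * a ^ 2 := by
      have : 7 * a ^ 2 = G1 a b - (a + b) * (b - 4 * a) := by unfold G1; ring
      rw [this]; exact dvd_sub h (Dvd.dvd.mul_right e _)
    rcases hp.dvd_or_dvd e7 with e | e
    · exact h7 e
    · exact ha (hp.dvd_of_dvd_pow e)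

lemma dvd_GG (a b : ℤ) : G1 a b ∣ GG a b ∧ G2 a b ∣ GG a b ∧ G3 a b ∣ GG a b := by
  unfold GG
  exact ⟨Dvd.intro _ (mul_assoc _ _ _).symm, ⟨G1 a b * G3 a b, by ring⟩, Dvd.intro_left _ rfl⟩

lemma Adm.not_dvd {a b : ℤ} (h : Adm a b) {p : ℤ} (hp : Prime p) (hpG : p ∣ GG a b) :
    ¬ p ∣ 2 ∧ ¬ p ∣ 3 ∧ ¬ p ∣ 7 := by
  obtain ⟨_, h2, h3, h7, _⟩ := h
  have key : ∀ q : ℤ, Prime q → ¬ q ∣ GG a b → ¬ p ∣ q := by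
    intro q hq hqG hpq
    exact hqG (((hp.associated_of_dvd hq hpq).symm.dvd).trans hpG)
  exact ⟨key 2 Int.prime_two h2, key 3 Int.prime_three h3,
    key 7 (Nat.prime_iff_prime_int.1 (by norm_num)) h7⟩

lemma Adm.not_cube_dvd {a b : ℤ} (h : Adm a b) {p : ℕ} (hp : p.Prime) :
    ¬ (p : ℤ) ^ 3 ∣ GG a b := by
  intro hd
  have hpi : Prime (p : ℤ) := Nat.prime_iff_prime_int.1 hp
  have hpG : (p : ℤ) ∣ GG a b := (dvd_pow_self _ (by norm_num)).trans hd
  obtain ⟨n2, n3, n7⟩ := h.not_dvd hpi hpG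
  obtain ⟨hab, -, -, -, hc, -⟩ := h
  obtain ⟨c1, c2, c3⟩ := hc p hp
  have cop : ∀ z : ℤ, ¬ (p : ℤ) ∣ z → IsCoprime ((p : ℤ) ^ 3) z := by
    intro z hz
    exact IsCoprime.pow_left ((Prime.coprime_iff_not_dvd hpi).2 hz)
  unfold GG at hd hpG
  by_cases h1 : (p : ℤ) ∣ G1 a b
  · have x2 : ¬ (p : ℤ) ∣ G2 a b := fun h => not_dvd_G1_G2 hpi hab n2 n7 h1 h
    have x3 : ¬ (p : ℤ) ∣ G3 a b := fun h => not_dvd_G1_G3 hpi hab n2 n7 h1 h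
    exact c1 ((cop _ x2).dvd_of_dvd_mul_right ((cop _ x3).dvd_of_dvd_mul_right hd))
  · by_cases h3 : (p : ℤ) ∣ G3 a b
    · have x2 : ¬ (p : ℤ) ∣ G2 a b := fun h => not_dvd_G3_G2 hpi hab n2 n7 h3 h
      exact c3 ((cop _ x2).dvd_of_dvd_mul_left ((cop _ h1).dvd_of_dvd_mul_left
        (by rwa [mul_assoc] at hd)))
    · exact c2 ((cop _ h1).dvd_of_dvd_mul_left ((cop _ h3).dvd_of_dvd_mul_right hd))

lemma Adm.cubefree {a b : ℤ} (h : Adm a b) : Cubefree (63 * GG a b) := by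
  intro p hp hd
  have hd' : ((p.natAbs : ℕ) : ℤ) ^ 3 ∣ 63 * GG a b := by
    rw [Int.natCast_natAbs, ← abs_pow, abs_dvd]; exact hd
  have hpn : p.natAbs.Prime := Int.prime_iff_natAbs_prime.1 hp
  generalize p.natAbs = q at hd' hpn
  have hqi : Prime (q : ℤ) := Nat.prime_iff_prime_int.1 hpn
  have hcase : q = 3 ∨ q = 7 ∨ (¬ (q : ℤ) ∣ 63) := by
    by_cases h63 : (q : ℤ) ∣ 63
    · have e : (63 : ℤ) = 3 * (3 * 7) := by norm_num
      rw [e] at h63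
      have t3 : (q : ℤ) ∣ 3 → q = 3 := fun h =>
        (Nat.prime_dvd_prime_iff_eq hpn Nat.prime_three).1 (by exact_mod_cast h)
      have t7 : (q : ℤ) ∣ 7 → q = 7 := fun h =>
        (Nat.prime_dvd_prime_iff_eq hpn (by norm_num)).1 (by exact_mod_cast h)
      rcases hqi.dvd_or_dvd h63 with h | h
      · exact Or.inl (t3 h)
      · rcases hqi.dvd_or_dvd h with h | h
        · exact Or.inl (t3 h)
        · exact Or.inr (Or.inl (t7 h))
    · exact Or.inr (Or.inr h63)
  rcases hcase with rfl | rfl | hq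
  · have := h.2.2.1
    push_cast at hd'
    omega
  · have := h.2.2.2.1
    push_cast at hd'
    omega
  · have : IsCoprime ((q : ℤ) ^ 3) 63 := IsCoprime.pow_left ((Prime.coprime_iff_not_dvd hqi).2 hq)
    exact h.not_cube_dvd hpn (this.dvd_of_dvd_mul_left hd')

lemma not_three_dvd_val {p : ℕ} (hp : p.Prime) {z : ℤ} (hz : z ≠ 0) (h1 : (p : ℤ) ∣ z)
    (h3 : ¬ (p : ℤ) ^ 3 ∣ z) : ¬ 3 ∣ padicValInt p z := by
  have : Fact p.Prime := ⟨hp⟩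
  have a1 : 1 ≤ padicValInt p z := by
    have := (padicValInt_dvd_iff (p := p) 1 z).1 (by simpa using h1)
    rcases this with h | h
    · exact absurd h hz
    · exact h
  have a3 : padicValInt p z < 3 := by
    by_contra hcon
    exact h3 ((padicValInt_dvd_iff (p := p) 3 z).2 (Or.inr (by omega)))
  omega

lemma Adm.rank {a b : ℤ} (h : Adm a b) : 2 ≤ Module.rank ℤ (W12 (63 * GG a b)).Point := by
  have hh := h
  obtain ⟨hab, k2, k3, k7, hc, g1, g3⟩ := h
  have hG0 : GG a b ≠ 0 := by intro h0; rw [h0] at k2; simp at k2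
  obtain ⟨p, hp, hpd⟩ := Nat.exists_prime_and_dvd (n := (G3 a b).natAbs) (by omega)
  obtain ⟨q, hq, hqd⟩ := Nat.exists_prime_and_dvd (n := (G1 a b).natAbs) (by omega)
  have hpd : (p : ℤ) ∣ G3 a b := Int.natCast_dvd.2 hpd
  have hqd : (q : ℤ) ∣ G1 a b := Int.natCast_dvd.2 hqd
  have hpi : Prime (p : ℤ) := Nat.prime_iff_prime_int.1 hp
  have hqi : Prime (q : ℤ) := Nat.prime_iff_prime_int.1 hq
  obtain ⟨d1, d2, d3⟩ := dvd_GG a b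
  obtain ⟨p2, p3, p7⟩ := hh.not_dvd hpi (hpd.trans d3)
  obtain ⟨q2, q3, q7⟩ := hh.not_dvd hqi (hqd.trans d1)
  have hpG1 : ¬ (p : ℤ) ∣ G1 a b := fun h => not_dvd_G1_G3 hpi hab p2 p7 h hpd
  have hpG2 : ¬ (p : ℤ) ∣ G2 a b := fun h => not_dvd_G3_G2 hpi hab p2 p7 hpd h
  have hqG3 : ¬ (q : ℤ) ∣ G3 a b := fun h => not_dvd_G1_G3 hqi hab q2 q7 hqd h
  have hqG2 : ¬ (q : ℤ) ∣ G2 a b := fun h => not_dvd_G1_G2 hqi hab q2 q7 hqd h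
  have hG2 : G2 a b ≠ 0 := by intro h; apply hG0; unfold GG; rw [h]; ring
  have mul2 : ∀ {r x y : ℤ}, Prime r → ¬ r ∣ x → ¬ r ∣ y → ¬ r ∣ x * y := by
    intro r x y hr hx hy hxy
    rcases hr.dvd_or_dvd hxy with h | h
    · exact hx h
    · exact hy h
  have p21 : ¬ (p : ℤ) ∣ 21 := by
    have := mul2 hpi p3 p7; norm_num at this; exact this
  have q21 : ¬ (q : ℤ) ∣ 21 := by
    have := mul2 hqi q3 q7; norm_num at this; exact this
  have val : ∀ {r : ℕ} {x y : ℤ}, r.Prime → ¬ (r : ℤ) ∣ x → y ≠ 0 →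
      padicValInt r (x * y) = padicValInt r y := by
    intro r x y hr hx hy
    have : Fact r.Prime := ⟨hr⟩
    rw [padicValInt.mul (by rintro rfl; simp at hx) hy, padicValInt.eq_zero_of_not_dvd hx, zero_add]
  refine rank_ge_two (63 * GG a b)
    (5 * a ^ 2 - 5 * a * b - 3 * b ^ 2) (4 * a ^ 2 - 4 * a * b + 6 * b ^ 2) ((21 * G2 a b) * G3 a b)
    (5 * b ^ 2 - 5 * a * b - 3 * a ^ 2) (4 * b ^ 2 - 4 * a * b + 6 * a ^ 2) ((21 * G2 a b) * G1 a b)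
    (mul_ne_zero (by norm_num) hG0) (by unfold G2 G3; ring) (by unfold GG G1 G2 G3; ring)
    (by unfold G2 G1; ring) (by unfold GG G1 G2 G3; ring) p q hp hq
    (by rintro rfl; simp at p2) (by rintro rfl; simp at p3)
    (by rintro rfl; simp at q2) (by rintro rfl; simp at q3)
    ⟨a - 2 * b, b, not_dvd_of_dvd_G3 hpi hab hpd, ?_⟩
    ⟨b - 2 * a, a, not_dvd_of_dvd_G1 hqi hab hqd, ?_⟩ ?_ ?_ (mul2 hpi (mul2 hpi p21 hpG2) hpG1)
      ?_ ?_ (mul2 hqi (mul2 hqi q21 hqG2) hqG3)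
  · convert hpd using 1; unfold G3; ring
  · convert hqd using 1; unfold G1; ring
  · have : 5 * a ^ 2 - 5 * a * b - 3 * b ^ 2 + (4 * a ^ 2 - 4 * a * b + 6 * b ^ 2) = 3 * G1 a b := by
      unfold G1; ring
    rw [this]; exact mul2 hpi p3 hpG1
  · rw [val hp (mul2 hpi p21 hpG2) (by omega)]
    exact not_three_dvd_val hp (by omega) hpd (hc p hp).2.2
  · have : 5 * b ^ 2 - 5 * a * b - 3 * a ^ 2 + (4 * b ^ 2 - 4 * a * b + 6 * a ^ 2) = 3 * G3 a b := by
      unfold G3; ring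
    rw [this]; exact mul2 hqi q3 hqG3
  · rw [val hq (mul2 hqi q21 hqG2) (by omega)]
    exact not_three_dvd_val hq (by omega) hqd (hc q hq).1

lemma card_ap (N m : ℕ) (_hm : 0 < m) (S : Finset ℕ) (hS : S ⊆ Finset.range N)
    (h : ∀ u ∈ S, ∀ v ∈ S, (m : ℤ) ∣ (u : ℤ) - v) : S.card ≤ N / m + 1 := by
  rw [← Finset.card_range (N / m + 1)]
  refine Finset.card_le_card_of_injOn (fun u => u / m) ?_ ?_
  · intro u hu
    have := Finset.mem_range.1 (hS hu)
    simp only [Finset.coe_range, Set.mem_Iio]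
    exact Nat.lt_succ_of_le (Nat.div_le_div_right this.le)
  · intro u hu v hv huv
    have h1 := h u hu v hv
    have h2 : u % m = v % m := by
      have := (Nat.modEq_iff_dvd (n := m) (a := v) (b := u)).2 h1
      exact this.symm
    simp only at huv
    rw [← Nat.div_add_mod u m, ← Nat.div_add_mod v m, huv, h2]

lemma card_quad (N p k : ℕ) (hp : p.Prime) (hk : 1 ≤ k) (hp3 : p ≠ 3) (M e y : ℤ)
    (hM : ¬ (p : ℤ) ∣ M) (hy : ¬ (p : ℤ) ∣ y) :
    ((Finset.range N).filter (fun u : ℕ => (p : ℤ) ^ k ∣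
      (M * u + e) ^ 2 + (M * u + e) * y + y ^ 2)).card ≤ 2 * (N / p ^ k + 1) := by
  have hpi : Prime (p : ℤ) := Nat.prime_iff_prime_int.1 hp
  have hpk : 0 < p ^ k := pow_pos hp.pos k
  set S := (Finset.range N).filter (fun u : ℕ => (p : ℤ) ^ k ∣
      (M * u + e) ^ 2 + (M * u + e) * y + y ^ 2) with hSdef
  have hMk : IsCoprime ((p : ℤ) ^ k) M := IsCoprime.pow_left ((Prime.coprime_iff_not_dvd hpi).2 hM)
  have h3 : ¬ (p : ℤ) ∣ 3 := by
    intro h; exact hp3 ((Nat.prime_dvd_prime_iff_eq hp Nat.prime_three).1 (by exact_mod_cast h))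
  rcases S.eq_empty_or_nonempty with h0 | ⟨u0, hu0⟩
  · rw [h0]; simp
  have hmem : ∀ u ∈ S, (p : ℤ) ^ k ∣ (M * u + e) ^ 2 + (M * u + e) * y + y ^ 2 := by
    intro u hu; exact (Finset.mem_filter.1 hu).2
  have hsplit : ∀ u ∈ S, (p : ℤ) ^ k ∣ (u : ℤ) - u0 ∨ (p : ℤ) ^ k ∣ M * u + M * u0 + 2 * e + y := by
    intro u hu
    have d1 := hmem u hu
    have d0 := hmem u0 hu0
    have d : (p : ℤ) ^ k ∣ (M * ((u : ℤ) - u0)) * (M * u + M * u0 + 2 * e + y) := by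
      have : (M * ((u : ℤ) - u0)) * (M * u + M * u0 + 2 * e + y) =
        ((M * u + e) ^ 2 + (M * u + e) * y + y ^ 2) -
          ((M * u0 + e) ^ 2 + (M * u0 + e) * y + y ^ 2) := by ring
      rw [this]; exact dvd_sub d1 d0
    by_cases hd : (p : ℤ) ∣ M * u + M * u0 + 2 * e + y
    · right
      have : ¬ (p : ℤ) ∣ M * ((u : ℤ) - u0) := by
        intro hd'
        have h1 : (p : ℤ) ∣ 2 * (M * u + e) + y := by
          have e1 : 2 * (M * u + e) + y = (M * u + M * u0 + 2 * e + y) + M * ((u : ℤ) - u0) := by ring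
          rw [e1]; exact dvd_add hd hd'
        have h2 : (p : ℤ) ∣ 3 * y ^ 2 := by
          have e1 : 3 * y ^ 2 = 4 * ((M * u + e) ^ 2 + (M * u + e) * y + y ^ 2) -
            (2 * (M * u + e) + y) * (2 * (M * u + e) + y) := by ring
          rw [e1]
          exact dvd_sub (Dvd.dvd.mul_left ((dvd_pow_self _ (by omega)).trans d1) _)
            (Dvd.dvd.mul_left h1 _)
        rcases hpi.dvd_or_dvd h2 with h | h
        · exact h3 h
        · exact hy (hpi.dvd_of_dvd_pow h)
      have hc : IsCoprime ((p : ℤ) ^ k) (M * ((u : ℤ) - u0)) :=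
        IsCoprime.pow_left ((Prime.coprime_iff_not_dvd hpi).2 this)
      exact hc.dvd_of_dvd_mul_left d
    · left
      have hc : IsCoprime ((p : ℤ) ^ k) (M * u + M * u0 + 2 * e + y) :=
        IsCoprime.pow_left ((Prime.coprime_iff_not_dvd hpi).2 hd)
      exact hMk.dvd_of_dvd_mul_left (hc.dvd_of_dvd_mul_right d)
  have hsub : S ⊆ S.filter (fun u : ℕ => (p : ℤ) ^ k ∣ (u : ℤ) - u0) ∪
      S.filter (fun u : ℕ => (p : ℤ) ^ k ∣ M * u + M * u0 + 2 * e + y) := by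
    intro u hu
    rcases hsplit u hu with h | h
    · exact Finset.mem_union_left _ (Finset.mem_filter.2 ⟨hu, h⟩)
    · exact Finset.mem_union_right _ (Finset.mem_filter.2 ⟨hu, h⟩)
  have hSr : S ⊆ Finset.range N := Finset.filter_subset _ _
  have c1 := card_ap N (p ^ k) hpk (S.filter (fun u : ℕ => (p : ℤ) ^ k ∣ (u : ℤ) - u0))
    ((Finset.filter_subset _ _).trans hSr) (by
      intro u hu v hv
      have a1 := (Finset.mem_filter.1 hu).2
      have a2 := (Finset.mem_filter.1 hv).2
      have : (u : ℤ) - v = (u - u0) - (v - u0) := by ring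
      rw [this]; push_cast; exact dvd_sub a1 a2)
  have c2 := card_ap N (p ^ k) hpk
    (S.filter (fun u : ℕ => (p : ℤ) ^ k ∣ M * u + M * u0 + 2 * e + y))
    ((Finset.filter_subset _ _).trans hSr) (by
      intro u hu v hv
      have a1 := (Finset.mem_filter.1 hu).2
      have a2 := (Finset.mem_filter.1 hv).2
      have : M * ((u : ℤ) - v) = (M * u + M * u0 + 2 * e + y) - (M * v + M * u0 + 2 * e + y) := by ring
      push_cast
      apply hMk.dvd_of_dvd_mul_left
      rw [this]; exact dvd_sub a1 a2)
  have := (Finset.card_le_card hsub).trans (Finset.card_union_le _ _)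
  omega

/-- Bound for a set of pairs from a bound on fibres over the first coordinate. -/
lemma card_pairs_fst (N c : ℕ) (S : Finset (ℕ × ℕ)) (hS : S ⊆ Finset.range N ×ˢ Finset.range N)
    (h : ∀ u, ((Finset.range N).filter (fun v => (u, v) ∈ S)).card ≤ c) : S.card ≤ c * N := by
  have h1 := Finset.card_le_mul_card_image (f := Prod.fst) S c (by
    intro u _
    refine le_trans ?_ (h u)
    refine Finset.card_le_card_of_injOn Prod.snd ?_ ?_
    · rintro ⟨u', v⟩ hz
      simp only [Finset.coe_filter, Set.mem_ofPred_eq] at hz ⊢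
      obtain ⟨hz, rfl⟩ := hz
      exact ⟨(Finset.mem_product.1 (hS hz)).2, hz⟩
    · rintro ⟨u1, v1⟩ h1 ⟨u2, v2⟩ h2 h12
      simp only [Finset.coe_filter, Set.mem_ofPred_eq] at h1 h2 h12
      rw [Prod.mk.injEq]
      exact ⟨h1.2.trans h2.2.symm, h12⟩)
  refine h1.trans (Nat.mul_le_mul_left _ ?_)
  rw [← Finset.card_range N]
  apply Finset.card_le_card
  intro u hu
  obtain ⟨z, hz, rfl⟩ := Finset.mem_image.1 hu
  exact (Finset.mem_product.1 (hS hz)).1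

lemma card_pairs_snd (N c : ℕ) (S : Finset (ℕ × ℕ)) (hS : S ⊆ Finset.range N ×ˢ Finset.range N)
    (h : ∀ v, ((Finset.range N).filter (fun u => (u, v) ∈ S)).card ≤ c) : S.card ≤ c * N := by
  have := card_pairs_fst N c (S.image Prod.swap) (by
    intro z hz
    obtain ⟨w, hw, rfl⟩ := Finset.mem_image.1 hz
    have := Finset.mem_product.1 (hS hw)
    exact Finset.mem_product.2 ⟨this.2, this.1⟩) (by
    intro v
    refine le_trans (Finset.card_le_card ?_) (h v)
    intro u hu
    rw [Finset.mem_filter] at hu ⊢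
    refine ⟨hu.1, ?_⟩
    obtain ⟨w, hw, hw'⟩ := Finset.mem_image.1 hu.2
    have : w = (u, v) := by rw [← Prod.swap_swap w, hw']; rfl
    rwa [← this])
  rwa [Finset.card_image_of_injective _ Prod.swap_injective] at this

/-- First coordinate. -/
def av (M0 N u : ℕ) : ℤ := 3 * M0 * (N + u) + 1
/-- Second coordinate. -/
def bv (M0 N v : ℕ) : ℤ := 3 * M0 * (N + v) + 2 * M0 ^ 2

lemma GG_not_dvd_of_dvd_M (M0 N u v : ℕ) (h3 : ¬ 3 ∣ M0) (p : ℕ) (hp : p.Prime)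
    (hpM : p ∣ 3 * M0) : ¬ (p : ℤ) ∣ GG (av M0 N u) (bv M0 N v) := by
  have hpi : Prime (p : ℤ) := Nat.prime_iff_prime_int.1 hp
  by_cases h : p = 3
  · subst h
    have hm : ¬ (3 : ℤ) ∣ M0 := by exact_mod_cast h3
    have hM2 : (3 : ℤ) ∣ (M0 : ℤ) ^ 2 - 1 := by
      have : (M0 : ℤ) % 3 = 1 ∨ (M0 : ℤ) % 3 = 2 := by omega
      rcases this with h | h
      · obtain ⟨k, hk⟩ : (3 : ℤ) ∣ (M0 : ℤ) - 1 := by omega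
        exact ⟨k * (M0 + 1), by linear_combination (M0 + 1 : ℤ) * hk⟩
      · obtain ⟨k, hk⟩ : (3 : ℤ) ∣ (M0 : ℤ) + 1 := by omega
        exact ⟨k * (M0 - 1), by linear_combination (M0 - 1 : ℤ) * hk⟩
    obtain ⟨k, hk⟩ := hM2
    obtain ⟨a, ha⟩ : ∃ a : ℤ, av M0 N u = 3 * a + 1 := ⟨M0 * (N + u), by unfold av; ring⟩
    obtain ⟨b, hb⟩ : ∃ b : ℤ, bv M0 N v = 3 * b + 2 :=
      ⟨M0 * (N + v) + 2 * k, by unfold bv; linear_combination 2 * hk⟩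
    rw [ha, hb]
    intro hd
    have hp3 : Prime (3 : ℤ) := Int.prime_three
    unfold GG at hd
    push_cast at hd
    rcases hp3.dvd_or_dvd hd with h | h
    · rcases hp3.dvd_or_dvd h with h | h
      · unfold G1 at h; ring_nf at h; omega
      · unfold G2 at h; ring_nf at h; omega
    · unfold G3 at h; ring_nf at h; omega
  · have hpM0 : p ∣ M0 := by
      rcases hp.dvd_mul.1 hpM with h' | h'
      · exact absurd ((Nat.prime_dvd_prime_iff_eq hp Nat.prime_three).1 h') h
      · exact h'
    obtain ⟨m, rfl⟩ := hpM0
    intro hd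
    have h3' : ¬ (p : ℤ) ∣ 3 := by
      intro h'; exact h ((Nat.prime_dvd_prime_iff_eq hp Nat.prime_three).1 (by exact_mod_cast h'))
    obtain ⟨a, ha⟩ : ∃ a : ℤ, av (p * m) N u = p * a + 1 :=
      ⟨3 * m * (N + u), by unfold av; push_cast; ring⟩
    obtain ⟨b, hb⟩ : ∃ b : ℤ, bv (p * m) N v = p * b :=
      ⟨3 * m * (N + v) + 2 * p * m ^ 2, by unfold bv; push_cast; ring⟩
    rw [ha, hb] at hd
    have hmod : (p : ℤ) ∣ GG (p * a + 1) (p * b) - 3 := by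
      have : GG (p * a + 1) (p * b) ≡ GG 1 0 [ZMOD p] := by
        have e1 : (p : ℤ) * a + 1 ≡ 1 [ZMOD p] := by
          rw [Int.modEq_comm, Int.modEq_iff_dvd]; exact ⟨a, by ring⟩
        have e2 : (p : ℤ) * b ≡ 0 [ZMOD p] := by
          rw [Int.modEq_comm, Int.modEq_iff_dvd]; exact ⟨b, by ring⟩
        unfold GG G1 G2 G3
        gcongr
      have := this.symm.dvd
      simpa [GG, G1, G2, G3] using this
    apply h3'
    have e : (3 : ℤ) = GG (p * a + 1) (p * b) - (GG (p * a + 1) (p * b) - 3) := by ring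
    rw [e]; exact dvd_sub hd hmod

/-- The grid of parameters. -/
def grid (N : ℕ) : Finset (ℕ × ℕ) := Finset.range N ×ˢ Finset.range N

open Classical in
lemma card_G1 (M0 N p k : ℕ) (hp : p.Prime) (hk : 1 ≤ k) (hpM : ¬ p ∣ 3 * M0) :
    ((grid N).filter (fun z => IsCoprime (av M0 N z.1) (bv M0 N z.2) ∧
      (p : ℤ) ^ k ∣ G1 (av M0 N z.1) (bv M0 N z.2))).card ≤ 2 * (N / p ^ k + 1) * N := by
  have hpi : Prime (p : ℤ) := Nat.prime_iff_prime_int.1 hp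
  have hM : ¬ (p : ℤ) ∣ 3 * M0 := by exact_mod_cast hpM
  have hp3 : p ≠ 3 := by rintro rfl; exact hpM (Dvd.intro _ rfl)
  refine card_pairs_fst N _ _ (Finset.filter_subset _ _) ?_
  intro u
  by_cases ha : (p : ℤ) ∣ av M0 N u
  · rw [Finset.filter_false_of_mem, Finset.card_empty]
    · exact Nat.zero_le _
    · intro v _ hm
      obtain ⟨-, h1, h2⟩ := Finset.mem_filter.1 hm
      exact not_dvd_of_dvd_G1 hpi h1 ((dvd_pow_self _ (by omega)).trans h2) ha
  · refine le_trans (Finset.card_le_card ?_)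
      (card_quad N p k hp hk hp3 (3 * M0) (3 * M0 * N + 2 * M0 ^ 2 - 2 * av M0 N u) (av M0 N u) hM ha)
    intro v hv
    obtain ⟨hv, hm⟩ := Finset.mem_filter.1 hv
    obtain ⟨-, h1, h2⟩ := Finset.mem_filter.1 hm
    refine Finset.mem_filter.2 ⟨hv, ?_⟩
    convert h2 using 1
    simp only [G1, bv]; ring

open Classical in
lemma card_G2 (M0 N p k : ℕ) (hp : p.Prime) (hk : 1 ≤ k) (hpM : ¬ p ∣ 3 * M0) :
    ((grid N).filter (fun z => IsCoprime (av M0 N z.1) (bv M0 N z.2) ∧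
      (p : ℤ) ^ k ∣ G2 (av M0 N z.1) (bv M0 N z.2))).card ≤ 2 * (N / p ^ k + 1) * N := by
  have hpi : Prime (p : ℤ) := Nat.prime_iff_prime_int.1 hp
  have hM : ¬ (p : ℤ) ∣ 3 * M0 := by exact_mod_cast hpM
  have hp3 : p ≠ 3 := by rintro rfl; exact hpM (Dvd.intro _ rfl)
  refine card_pairs_snd N _ _ (Finset.filter_subset _ _) ?_
  intro v
  by_cases hb : (p : ℤ) ∣ bv M0 N v
  · rw [Finset.filter_false_of_mem, Finset.card_empty]
    · exact Nat.zero_le _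
    · intro u _ hm
      obtain ⟨-, h1, h2⟩ := Finset.mem_filter.1 hm
      exact (not_dvd_of_dvd_G2 hpi h1 ((dvd_pow_self _ (by omega)).trans h2)).2 hb
  · refine le_trans (Finset.card_le_card ?_)
      (card_quad N p k hp hk hp3 (3 * M0) (3 * M0 * N + 1) (bv M0 N v) hM hb)
    intro u hu
    obtain ⟨hu, hm⟩ := Finset.mem_filter.1 hu
    obtain ⟨-, h1, h2⟩ := Finset.mem_filter.1 hm
    refine Finset.mem_filter.2 ⟨hu, ?_⟩
    convert h2 using 1
    simp only [G2, av]; ring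

open Classical in
lemma card_G3 (M0 N p k : ℕ) (hp : p.Prime) (hk : 1 ≤ k) (hpM : ¬ p ∣ 3 * M0) :
    ((grid N).filter (fun z => IsCoprime (av M0 N z.1) (bv M0 N z.2) ∧
      (p : ℤ) ^ k ∣ G3 (av M0 N z.1) (bv M0 N z.2))).card ≤ 2 * (N / p ^ k + 1) * N := by
  have hpi : Prime (p : ℤ) := Nat.prime_iff_prime_int.1 hp
  have hM : ¬ (p : ℤ) ∣ 3 * M0 := by exact_mod_cast hpM
  have hp3 : p ≠ 3 := by rintro rfl; exact hpM (Dvd.intro _ rfl)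
  refine card_pairs_snd N _ _ (Finset.filter_subset _ _) ?_
  intro v
  by_cases hb : (p : ℤ) ∣ bv M0 N v
  · rw [Finset.filter_false_of_mem, Finset.card_empty]
    · exact Nat.zero_le _
    · intro u _ hm
      obtain ⟨-, h1, h2⟩ := Finset.mem_filter.1 hm
      exact (not_dvd_of_dvd_G3 hpi h1 ((dvd_pow_self _ (by omega)).trans h2)) hb
  · refine le_trans (Finset.card_le_card ?_)
      (card_quad N p k hp hk hp3 (3 * M0) (3 * M0 * N + 1 - 2 * bv M0 N v) (bv M0 N v) hM hb)
    intro u hu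
    obtain ⟨hu, hm⟩ := Finset.mem_filter.1 hu
    obtain ⟨-, h1, h2⟩ := Finset.mem_filter.1 hm
    refine Finset.mem_filter.2 ⟨hu, ?_⟩
    convert h2 using 1
    simp only [G3, av]; ring

open Classical in
/-- Pairs with `p ∣ GG`. -/
lemma card_GG (M0 N p : ℕ) (hp : p.Prime) (hpM : ¬ p ∣ 3 * M0) :
    ((grid N).filter (fun z => IsCoprime (av M0 N z.1) (bv M0 N z.2) ∧
      (p : ℤ) ∣ GG (av M0 N z.1) (bv M0 N z.2))).card ≤ 6 * (N / p + 1) * N := by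
  have hpi : Prime (p : ℤ) := Nat.prime_iff_prime_int.1 hp
  have h1 := card_G1 M0 N p 1 hp le_rfl hpM
  have h2 := card_G2 M0 N p 1 hp le_rfl hpM
  have h3 := card_G3 M0 N p 1 hp le_rfl hpM
  simp only [pow_one] at h1 h2 h3
  have := Finset.card_union_le
    ((grid N).filter (fun z => IsCoprime (av M0 N z.1) (bv M0 N z.2) ∧
      (p : ℤ) ∣ G1 (av M0 N z.1) (bv M0 N z.2)) ∪
    (grid N).filter (fun z => IsCoprime (av M0 N z.1) (bv M0 N z.2) ∧
      (p : ℤ) ∣ G2 (av M0 N z.1) (bv M0 N z.2)))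
    ((grid N).filter (fun z => IsCoprime (av M0 N z.1) (bv M0 N z.2) ∧
      (p : ℤ) ∣ G3 (av M0 N z.1) (bv M0 N z.2)))
  have := Finset.card_union_le
    ((grid N).filter (fun z => IsCoprime (av M0 N z.1) (bv M0 N z.2) ∧
      (p : ℤ) ∣ G1 (av M0 N z.1) (bv M0 N z.2)))
    ((grid N).filter (fun z => IsCoprime (av M0 N z.1) (bv M0 N z.2) ∧
      (p : ℤ) ∣ G2 (av M0 N z.1) (bv M0 N z.2)))
  calc _ ≤ _ := Finset.card_le_card (t := (((grid N).filter (fun z =>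
          IsCoprime (av M0 N z.1) (bv M0 N z.2) ∧
      (p : ℤ) ∣ G1 (av M0 N z.1) (bv M0 N z.2)) ∪
    (grid N).filter (fun z => IsCoprime (av M0 N z.1) (bv M0 N z.2) ∧
      (p : ℤ) ∣ G2 (av M0 N z.1) (bv M0 N z.2))) ∪
    ((grid N).filter (fun z => IsCoprime (av M0 N z.1) (bv M0 N z.2) ∧
      (p : ℤ) ∣ G3 (av M0 N z.1) (bv M0 N z.2))))) ?_
    _ ≤ 2 * (N / p + 1) * N + 2 * (N / p + 1) * N + 2 * (N / p + 1) * N := by omega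
    _ = _ := by ring
  intro z hz
  obtain ⟨hz, hc, hd⟩ := Finset.mem_filter.1 hz
  simp only [Finset.mem_union, Finset.mem_filter]
  unfold GG at hd
  rcases hpi.dvd_or_dvd hd with h | h
  · rcases hpi.dvd_or_dvd h with h | h
    · exact Or.inl (Or.inl ⟨hz, hc, h⟩)
    · exact Or.inl (Or.inr ⟨hz, hc, h⟩)
  · exact Or.inr ⟨hz, hc, h⟩

open Classical in
/-- Pairs with a cube dividing some factor. -/
lemma card_cube (M0 N p : ℕ) (hp : p.Prime) (hpM : ¬ p ∣ 3 * M0) :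
    ((grid N).filter (fun z => IsCoprime (av M0 N z.1) (bv M0 N z.2) ∧
      ((p : ℤ) ^ 3 ∣ G1 (av M0 N z.1) (bv M0 N z.2) ∨ (p : ℤ) ^ 3 ∣ G2 (av M0 N z.1) (bv M0 N z.2) ∨
       (p : ℤ) ^ 3 ∣ G3 (av M0 N z.1) (bv M0 N z.2)))).card ≤ 6 * (N / p ^ 3 + 1) * N := by
  have h1 := card_G1 M0 N p 3 hp (by norm_num) hpM
  have h2 := card_G2 M0 N p 3 hp (by norm_num) hpM
  have h3 := card_G3 M0 N p 3 hp (by norm_num) hpM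
  simp only [and_or_left, Finset.filter_or]
  refine (Finset.card_union_le _ _).trans ?_
  have := Finset.card_union_le
    ((grid N).filter (fun z => IsCoprime (av M0 N z.1) (bv M0 N z.2) ∧
      (p : ℤ) ^ 3 ∣ G2 (av M0 N z.1) (bv M0 N z.2)))
    ((grid N).filter (fun z => IsCoprime (av M0 N z.1) (bv M0 N z.2) ∧
      (p : ℤ) ^ 3 ∣ G3 (av M0 N z.1) (bv M0 N z.2)))
  have e : 6 * (N / p ^ 3 + 1) * N = 2 * (N / p ^ 3 + 1) * N + (2 * (N / p ^ 3 + 1) * N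
    + 2 * (N / p ^ 3 + 1) * N) := by ring
  omega

open Classical in
/-- Pairs with both coordinates divisible by `p`. -/
lemma card_both (M0 N p : ℕ) (hp : p.Prime) (hpM : ¬ p ∣ 3 * M0) :
    ((grid N).filter (fun z => (p : ℤ) ∣ av M0 N z.1 ∧ (p : ℤ) ∣ bv M0 N z.2)).card ≤
      (N / p + 1) ^ 2 := by
  have hpi : Prime (p : ℤ) := Nat.prime_iff_prime_int.1 hp
  have hM : ¬ (p : ℤ) ∣ 3 * M0 := by exact_mod_cast hpM
  have hMk : IsCoprime (p : ℤ) (3 * M0) := (Prime.coprime_iff_not_dvd hpi).2 hM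
  have e : (grid N).filter (fun z => (p : ℤ) ∣ av M0 N z.1 ∧ (p : ℤ) ∣ bv M0 N z.2) =
    ((Finset.range N).filter (fun u => (p : ℤ) ∣ av M0 N u)) ×ˢ
    ((Finset.range N).filter (fun v => (p : ℤ) ∣ bv M0 N v)) := by
    ext ⟨u, v⟩
    simp only [grid, Finset.mem_filter, Finset.mem_product]
    tauto
  rw [e, Finset.card_product, pow_two]
  refine Nat.mul_le_mul ?_ ?_
  · refine card_ap N p hp.pos _ (Finset.filter_subset _ _) ?_
    intro u hu v hv
    have h1 := (Finset.mem_filter.1 hu).2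
    have h2 := (Finset.mem_filter.1 hv).2
    apply hMk.dvd_of_dvd_mul_left
    have : (3 * M0 : ℤ) * ((u : ℤ) - v) = av M0 N u - av M0 N v := by unfold av; ring
    rw [this]; exact dvd_sub h1 h2
  · refine card_ap N p hp.pos _ (Finset.filter_subset _ _) ?_
    intro u hu v hv
    have h1 := (Finset.mem_filter.1 hu).2
    have h2 := (Finset.mem_filter.1 hv).2
    apply hMk.dvd_of_dvd_mul_left
    have : (3 * M0 : ℤ) * ((u : ℤ) - v) = bv M0 N u - bv M0 N v := by unfold bv; ring
    rw [this]; exact dvd_sub h1 h2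

lemma pow_dvd_factorial_mul (p k : ℕ) (hp : 0 < p) : p ^ k ∣ (p * k).factorial := by
  induction k with
  | zero => simp
  | succ k ih =>
    rw [pow_succ, mul_add, mul_one]
    exact (mul_dvd_mul ih (Nat.dvd_factorial hp le_rfl)).trans
      (Nat.factorial_mul_factorial_dvd_factorial_add _ _)

/-- Mertens-type upper bound. -/
lemma mertens_upper (n : ℕ) (hn : 1 ≤ n) :
    ∑ p ∈ Nat.primesLE n, Real.log p / p ≤ Real.log n + Real.log 4 := by
  have hprime : ∀ p ∈ Nat.primesLE n, p.Prime := by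
    intro p hp; exact (Finset.mem_filter.1 hp).2
  have hn0 : (0 : ℝ) < n := by exact_mod_cast hn
  have hdvd : ∏ p ∈ Nat.primesLE n, p ^ (n / p) ∣ n.factorial := by
    apply Finset.prod_dvd_of_isRelPrime
    · intro p hp q hq hpq
      simp only [Function.onFun]
      rw [← Nat.coprime_iff_isRelPrime]
      exact Nat.Coprime.pow _ _ ((Nat.coprime_primes (hprime p hp) (hprime q hq)).2 hpq)
    · intro p hp
      exact (pow_dvd_factorial_mul p (n / p) (hprime p hp).pos).trans
        (Nat.factorial_dvd_factorial (Nat.mul_div_le n p))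
  have hle : ∏ p ∈ Nat.primesLE n, p ^ (n / p) ≤ n ^ n :=
    (Nat.le_of_dvd (Nat.factorial_pos n) hdvd).trans (Nat.factorial_le_pow n)
  have hlog : ∑ p ∈ Nat.primesLE n, ((n / p : ℕ) : ℝ) * Real.log p ≤ n * Real.log n := by
    have h1 : ((∏ p ∈ Nat.primesLE n, p ^ (n / p) : ℕ) : ℝ) ≤ (n : ℝ) ^ n := by exact_mod_cast hle
    have h2 := Real.log_le_log (by
      exact_mod_cast Finset.prod_pos (fun p hp => pow_pos (hprime p hp).pos _)) h1
    rw [Real.log_pow] at h2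
    push_cast at h2
    rw [Real.log_prod (fun p hp => by
      have := (hprime p hp).pos; positivity)] at h2
    simpa only [Real.log_pow] using h2
  have hth : ∑ p ∈ Nat.primesLE n, Real.log p ≤ Real.log 4 * n := by
    rw [← Chebyshev.theta_eq_sum_primesLE_log]
    exact Chebyshev.theta_le_log4_mul_x hn0.le
  have hfin : n * ∑ p ∈ Nat.primesLE n, Real.log p / p ≤ n * (Real.log n + Real.log 4) := by
    calc n * ∑ p ∈ Nat.primesLE n, Real.log p / p
        ≤ ∑ p ∈ Nat.primesLE n, (((n / p : ℕ) : ℝ) * Real.log p + Real.log p) := by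
          rw [Finset.mul_sum]
          apply Finset.sum_le_sum
          intro p hp
          have hpp := (hprime p hp)
          have hl : 0 ≤ Real.log p := Real.log_nonneg (by exact_mod_cast hpp.one_le)
          have : (n : ℝ) / p ≤ ((n / p : ℕ) : ℝ) + 1 := by
            have := Nat.lt_floor_add_one ((n : ℝ) / p)
            rw [Nat.floor_div_eq_div] at this
            exact this.le
          calc (n : ℝ) * (Real.log p / p) = (n : ℝ) / p * Real.log p := by ring
            _ ≤ (((n / p : ℕ) : ℝ) + 1) * Real.log p := by gcongr
            _ = _ := by ring
      _ ≤ n * Real.log n + Real.log 4 * n := by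
          rw [Finset.sum_add_distrib]; exact add_le_add hlog hth
      _ = _ := by ring
  exact le_of_mul_le_mul_left hfin hn0

/-- Tail of the sum of inverse squares. -/
lemma sum_inv_sq (K : ℕ) (hK : 1 ≤ K) (n : ℕ) :
    ∑ i ∈ Finset.Ioc K n, (1 : ℝ) / (i : ℝ) ^ 2 ≤ 1 / K := by
  have h := sum_Ioc_inv_sq_le_sub (α := ℝ) (k := K) (n := max K n) (by omega) (le_max_left _ _)
  calc ∑ i ∈ Finset.Ioc K n, (1 : ℝ) / (i : ℝ) ^ 2
      ≤ ∑ i ∈ Finset.Ioc K (max K n), ((i : ℝ) ^ 2)⁻¹ := by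
        simp only [one_div]
        apply Finset.sum_le_sum_of_subset_of_nonneg
        · exact Finset.Ioc_subset_Ioc_right (le_max_right _ _)
        · intros; positivity
    _ ≤ _ := h
    _ ≤ _ := by
      rw [one_div]
      have : (0 : ℝ) ≤ ((max K n : ℕ) : ℝ)⁻¹ := by positivity
      linarith

lemma av_bounds (M0 N u : ℕ) (hM : 1 ≤ M0) (hu : u < N) :
    (N : ℤ) ≤ av M0 N u ∧ av M0 N u ≤ (6 * M0 + 2 * M0 ^ 2 : ℕ) * N := by
  unfold av
  have h1 : (1 : ℤ) ≤ M0 := by exact_mod_cast hM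
  have h2 : (u : ℤ) + 1 ≤ N := by exact_mod_cast hu
  have h3 : (0 : ℤ) ≤ u := by positivity
  push_cast
  constructor
  · nlinarith
  · have : 3 * (M0 : ℤ) * (u + 1) ≤ 3 * M0 * N := by gcongr
    have : 0 ≤ 2 * (M0 : ℤ) ^ 2 * N := by positivity
    nlinarith

lemma bv_bounds (M0 N v : ℕ) (hM : 1 ≤ M0) (hv : v < N) :
    (N : ℤ) ≤ bv M0 N v ∧ bv M0 N v ≤ (6 * M0 + 2 * M0 ^ 2 : ℕ) * N := by
  unfold bv
  have h1 : (1 : ℤ) ≤ M0 := by exact_mod_cast hM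
  have h2 : (v : ℤ) + 1 ≤ N := by exact_mod_cast hv
  have h3 : (0 : ℤ) ≤ v := by positivity
  push_cast
  constructor
  · nlinarith [sq_nonneg (M0 : ℤ)]
  · have : 3 * (M0 : ℤ) * v ≤ 3 * M0 * N := by gcongr
    have : 2 * (M0 : ℤ) ^ 2 * 1 ≤ 2 * (M0 : ℤ) ^ 2 * N := by gcongr; linarith
    nlinarith

lemma G_bounds (a b n m : ℤ) (hn : 0 < n) (ha : n ≤ a) (hb : n ≤ b) (ha' : a ≤ m) (hb' : b ≤ m) :
    (n ^ 2 ≤ 4 * G1 a b ∧ G1 a b ≤ 4 * m ^ 2) ∧ (n ^ 2 ≤ 4 * G2 a b ∧ G2 a b ≤ 4 * m ^ 2) ∧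
    (n ^ 2 ≤ 4 * G3 a b ∧ G3 a b ≤ 4 * m ^ 2) := by
  have h1 : n ^ 2 ≤ a ^ 2 := by gcongr
  have h2 : n ^ 2 ≤ b ^ 2 := by gcongr
  have a0 : 0 < a := by linarith
  have b0 : 0 < b := by linarith
  have h3 : a ^ 2 ≤ m ^ 2 := by gcongr
  have h4 : b ^ 2 ≤ m ^ 2 := by gcongr
  have h5 : 0 < a * b := mul_pos a0 b0
  have h6 : a * b ≤ m ^ 2 := by nlinarith [sq_nonneg (a - b)]
  unfold G1 G2 G3
  refine ⟨⟨?_, ?_⟩, ⟨?_, ?_⟩, ?_, ?_⟩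
  · nlinarith [sq_nonneg (2 * a - b)]
  · nlinarith
  · nlinarith
  · nlinarith
  · nlinarith [sq_nonneg (2 * b - a)]
  · nlinarith

lemma real_div_le (N p : ℕ) : ((N / p : ℕ) : ℝ) ≤ (N : ℝ) / p := Nat.cast_div_le

open Classical in
lemma card_bad1 (M0 N : ℕ) (hM : 1 ≤ M0) (h100 : ∀ p : ℕ, p.Prime → p ≤ 100 → p ∣ 3 * M0) :
    (((grid N).filter (fun z => ¬ IsCoprime (av M0 N z.1) (bv M0 N z.2))).card : ℝ) ≤
      (N : ℝ) ^ 2 / 50 + 2 * (6 * M0 + 2 * M0 ^ 2 : ℕ) * N := by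
  set C0 := 6 * M0 + 2 * M0 ^ 2 with hC0
  have hsub : (grid N).filter (fun z => ¬ IsCoprime (av M0 N z.1) (bv M0 N z.2)) ⊆
      ((Finset.Ioc 100 (C0 * N)).filter (fun p => p.Prime ∧ ¬ p ∣ 3 * M0)).biUnion (fun p =>
        (grid N).filter (fun z => (p : ℤ) ∣ av M0 N z.1 ∧ (p : ℤ) ∣ bv M0 N z.2)) := by
    intro z hz
    obtain ⟨hz, hc⟩ := Finset.mem_filter.1 hz
    obtain ⟨hz1, hz2⟩ := Finset.mem_product.1 hz
    have b1 := av_bounds M0 N z.1 hM (Finset.mem_range.1 hz1)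
    have hN : 0 < N := by have := Finset.mem_range.1 hz1; omega
    rw [Int.isCoprime_iff_gcd_eq_one] at hc
    obtain ⟨p, hp, hpd⟩ := Nat.exists_prime_and_dvd hc
    have hpa : (p : ℤ) ∣ av M0 N z.1 := (Int.natCast_dvd_natCast.2 hpd).trans (Int.gcd_dvd_left ..)
    have hpb : (p : ℤ) ∣ bv M0 N z.2 := (Int.natCast_dvd_natCast.2 hpd).trans (Int.gcd_dvd_right ..)
    have hpM : ¬ p ∣ 3 * M0 := by
      intro h
      have h' : (p : ℤ) ∣ 3 * M0 := by exact_mod_cast h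
      have : (p : ℤ) ∣ 1 := by
        have e : (1 : ℤ) = av M0 N z.1 - 3 * M0 * (N + z.1) := by unfold av; ring
        rw [e]; exact dvd_sub hpa (Dvd.dvd.mul_right h' _)
      exact (Nat.prime_iff_prime_int.1 hp).not_isUnit (isUnit_of_dvd_one this)
    refine Finset.mem_biUnion.2 ⟨p, Finset.mem_filter.2 ⟨Finset.mem_Ioc.2 ⟨?_, ?_⟩, hp, hpM⟩,
      Finset.mem_filter.2 ⟨hz, hpa, hpb⟩⟩
    · by_contra hcon
      exact hpM (h100 p hp (by omega))
    · have := (Int.le_of_dvd (by have : (0 : ℤ) < N := by exact_mod_cast hN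
                                 linarith) hpa).trans b1.2
      exact_mod_cast this
  have h1 := (Finset.card_le_card hsub).trans Finset.card_biUnion_le
  calc (((grid N).filter (fun z => ¬ IsCoprime (av M0 N z.1) (bv M0 N z.2))).card : ℝ)
      ≤ ∑ p ∈ (Finset.Ioc 100 (C0 * N)).filter (fun p => p.Prime ∧ ¬ p ∣ 3 * M0),
        (((grid N).filter (fun z => (p : ℤ) ∣ av M0 N z.1 ∧ (p : ℤ) ∣ bv M0 N z.2)).card : ℝ) := by
        exact_mod_cast h1
    _ ≤ ∑ p ∈ (Finset.Ioc 100 (C0 * N)).filter (fun p => p.Prime ∧ ¬ p ∣ 3 * M0),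
        (2 * (N : ℝ) ^ 2 * (1 / (p : ℝ) ^ 2) + 2) := by
        apply Finset.sum_le_sum
        intro p hp
        obtain ⟨-, hp, hpM⟩ := Finset.mem_filter.1 hp
        have h2 : (((grid N).filter (fun z => (p : ℤ) ∣ av M0 N z.1 ∧
          (p : ℤ) ∣ bv M0 N z.2)).card : ℝ) ≤ (((N / p : ℕ) : ℝ) + 1) ^ 2 := by
          exact_mod_cast card_both M0 N p hp hpM
        have h3 := real_div_le N p
        have h4 : (((N / p : ℕ) : ℝ) + 1) ^ 2 ≤ ((N : ℝ) / p + 1) ^ 2 := by gcongr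
        have h5 : 2 * (N : ℝ) ^ 2 * (1 / (p : ℝ) ^ 2) = 2 * ((N : ℝ) / p) ^ 2 := by
          rw [div_pow]; ring
        rw [h5]
        nlinarith [sq_nonneg ((N : ℝ) / p - 1)]
    _ ≤ ∑ p ∈ Finset.Ioc 100 (C0 * N), (2 * (N : ℝ) ^ 2 * (1 / (p : ℝ) ^ 2) + 2) := by
        apply Finset.sum_le_sum_of_subset_of_nonneg (Finset.filter_subset _ _)
        intros; positivity
    _ ≤ _ := by
        rw [Finset.sum_add_distrib, ← Finset.mul_sum, Finset.sum_const, Nat.card_Ioc, nsmul_eq_mul]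
        have h6 := sum_inv_sq 100 (by norm_num) (C0 * N)
        have h7 : ((C0 * N - 100 : ℕ) : ℝ) ≤ C0 * N := by
          have : C0 * N - 100 ≤ C0 * N := Nat.sub_le _ _
          exact_mod_cast this
        have h8 : 2 * (N : ℝ) ^ 2 * (∑ i ∈ Finset.Ioc 100 (C0 * N), 1 / (i : ℝ) ^ 2) ≤
          2 * (N : ℝ) ^ 2 * (1 / ((100 : ℕ) : ℝ)) := by gcongr
        push_cast at h8
        nlinarith

open Classical in
lemma card_bad2 (M0 N : ℕ) (hM : 1 ≤ M0) (h3 : ¬ 3 ∣ M0)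
    (h100 : ∀ p : ℕ, p.Prime → p ≤ 100 → p ∣ 3 * M0)
    (hN : 4 * 100 ^ 3 * (6 * M0 + 2 * M0 ^ 2) ^ 2 ≤ N) :
    (((grid N).filter (fun z => IsCoprime (av M0 N z.1) (bv M0 N z.2) ∧ ∃ p : ℕ, p.Prime ∧
      ((p : ℤ) ^ 3 ∣ G1 (av M0 N z.1) (bv M0 N z.2) ∨ (p : ℤ) ^ 3 ∣ G2 (av M0 N z.1) (bv M0 N z.2) ∨
       (p : ℤ) ^ 3 ∣ G3 (av M0 N z.1) (bv M0 N z.2)))).card : ℝ) ≤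
      12 * (N : ℝ) ^ 2 / 100 := by
  set C0 := 6 * M0 + 2 * M0 ^ 2 with hC0
  have hsub : (grid N).filter (fun z => IsCoprime (av M0 N z.1) (bv M0 N z.2) ∧ ∃ p : ℕ, p.Prime ∧
      ((p : ℤ) ^ 3 ∣ G1 (av M0 N z.1) (bv M0 N z.2) ∨ (p : ℤ) ^ 3 ∣ G2 (av M0 N z.1) (bv M0 N z.2) ∨
       (p : ℤ) ^ 3 ∣ G3 (av M0 N z.1) (bv M0 N z.2))) ⊆
      ((Finset.Ioc 100 (N / 100)).filter (fun p => p.Prime ∧ ¬ p ∣ 3 * M0)).biUnion (fun p =>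
        (grid N).filter (fun z => IsCoprime (av M0 N z.1) (bv M0 N z.2) ∧
      ((p : ℤ) ^ 3 ∣ G1 (av M0 N z.1) (bv M0 N z.2) ∨ (p : ℤ) ^ 3 ∣ G2 (av M0 N z.1) (bv M0 N z.2) ∨
       (p : ℤ) ^ 3 ∣ G3 (av M0 N z.1) (bv M0 N z.2)))) := by
    intro z hz
    obtain ⟨hz, hc, p, hp, hd⟩ := Finset.mem_filter.1 hz
    obtain ⟨hz1, hz2⟩ := Finset.mem_product.1 hz
    have b1 := av_bounds M0 N z.1 hM (Finset.mem_range.1 hz1)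
    have b2 := bv_bounds M0 N z.2 hM (Finset.mem_range.1 hz2)
    have hN0 : 0 < N := by have := Finset.mem_range.1 hz1; omega
    have hN0' : (0 : ℤ) < N := by exact_mod_cast hN0
    have hN2 : (0 : ℤ) < (N : ℤ) ^ 2 := by positivity
    obtain ⟨⟨l1, u1⟩, ⟨l2, u2⟩, l3, u3⟩ := G_bounds _ _ N _ hN0' b1.1 b2.1 b1.2 b2.2
    obtain ⟨d1, d2, d3⟩ := dvd_GG (av M0 N z.1) (bv M0 N z.2)
    have hpM : ¬ p ∣ 3 * M0 := by
      intro h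
      refine GG_not_dvd_of_dvd_M M0 N z.1 z.2 h3 p hp h ?_
      refine (dvd_pow_self (p : ℤ) (n := 3) (by norm_num)).trans ?_
      rcases hd with h | h | h
      · exact h.trans d1
      · exact h.trans d2
      · exact h.trans d3
    have hp3 : (p : ℤ) ^ 3 ≤ 4 * ((C0 : ℤ) * N) ^ 2 := by
      rcases hd with h | h | h
      · exact (Int.le_of_dvd (by linarith) h).trans u1
      · exact (Int.le_of_dvd (by linarith) h).trans u2
      · exact (Int.le_of_dvd (by linarith) h).trans u3
    have hp3' : p ^ 3 ≤ 4 * (C0 * N) ^ 2 := by exact_mod_cast hp3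
    refine Finset.mem_biUnion.2 ⟨p, Finset.mem_filter.2 ⟨Finset.mem_Ioc.2 ⟨?_, ?_⟩, hp, hpM⟩,
      Finset.mem_filter.2 ⟨hz, hc, hd⟩⟩
    · by_contra hcon
      exact hpM (h100 p hp (by omega))
    · rw [Nat.le_div_iff_mul_le (by norm_num)]
      have : (p * 100) ^ 3 ≤ N ^ 3 := by
        calc (p * 100) ^ 3 = p ^ 3 * 100 ^ 3 := by ring
          _ ≤ 4 * (C0 * N) ^ 2 * 100 ^ 3 := by gcongr
          _ = (4 * 100 ^ 3 * C0 ^ 2) * N ^ 2 := by ring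
          _ ≤ N * N ^ 2 := by gcongr
          _ = _ := by ring
      exact le_of_pow_le_pow_left₀ (by norm_num) (Nat.zero_le _) this
  have h1 := (Finset.card_le_card hsub).trans Finset.card_biUnion_le
  refine le_trans (b := ∑ p ∈ (Finset.Ioc 100 (N / 100)).filter (fun p => p.Prime ∧ ¬ p ∣ 3 * M0),
        (6 * (N : ℝ) ^ 2 * (1 / (p : ℝ) ^ 2) + 6 * N)) ?_ ?_
  · refine le_trans (Nat.cast_le.2 h1) ?_
    push_cast
    apply Finset.sum_le_sum
    intro p hp
    obtain ⟨-, hp, hpM⟩ := Finset.mem_filter.1 hp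
    have h2 := card_cube M0 N p hp hpM
    have h2' := (Nat.cast_le (α := ℝ)).2 h2
    push_cast at h2'
    refine h2'.trans ?_
    have h3 := real_div_le N (p ^ 3)
    push_cast at h3
    have hp1 : (1 : ℝ) ≤ p := by exact_mod_cast hp.one_le
    have h4 : (N : ℝ) / (p : ℝ) ^ 3 ≤ N / (p : ℝ) ^ 2 := by
      gcongr
      norm_num
    calc 6 * (((N / p ^ 3 : ℕ) : ℝ) + 1) * N ≤ 6 * ((N : ℝ) / (p : ℝ) ^ 2 + 1) * N := by
          gcongr; exact h3.trans h4
      _ = _ := by ring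
  · calc ∑ p ∈ (Finset.Ioc 100 (N / 100)).filter (fun p => p.Prime ∧ ¬ p ∣ 3 * M0),
        (6 * (N : ℝ) ^ 2 * (1 / (p : ℝ) ^ 2) + 6 * N) ≤
        ∑ p ∈ Finset.Ioc 100 (N / 100), (6 * (N : ℝ) ^ 2 * (1 / (p : ℝ) ^ 2) + 6 * N) := by
          apply Finset.sum_le_sum_of_subset_of_nonneg (Finset.filter_subset _ _)
          intros; positivity
      _ ≤ _ := by
        rw [Finset.sum_add_distrib, ← Finset.mul_sum, Finset.sum_const, Nat.card_Ioc, nsmul_eq_mul]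
        have h6 := sum_inv_sq 100 (by norm_num) (N / 100)
        have h7 : ((N / 100 - 100 : ℕ) : ℝ) ≤ N / 100 := by
          have : ((N / 100 - 100 : ℕ) : ℝ) ≤ ((N / 100 : ℕ) : ℝ) := by
            exact_mod_cast Nat.sub_le _ _
          exact this.trans (by exact_mod_cast real_div_le N 100)
        have h8 : 6 * (N : ℝ) ^ 2 * (∑ i ∈ Finset.Ioc 100 (N / 100), 1 / (i : ℝ) ^ 2) ≤
          6 * (N : ℝ) ^ 2 * (1 / ((100 : ℕ) : ℝ)) := by gcongr
        have h9 : ((N / 100 - 100 : ℕ) : ℝ) * (6 * N) ≤ N / 100 * (6 * N) := by gcongr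
        push_cast at h8
        nlinarith

open Classical in
lemma card_bad3 (M0 N y : ℕ) (h3 : ¬ 3 ∣ M0) (hy : 4 ≤ y) (hyN : y ≤ N) :
    (((grid N).filter (fun z => IsCoprime (av M0 N z.1) (bv M0 N z.2) ∧
      50 * Real.log y < ∑ p ∈ (Nat.primesLE y).filter
        (fun p : ℕ => (p : ℤ) ∣ GG (av M0 N z.1) (bv M0 N z.2)), Real.log p)).card : ℝ) ≤
      12 * (N : ℝ) ^ 2 / 25 := by
  have hprime : ∀ p ∈ Nat.primesLE y, p.Prime := fun p hp => (Finset.mem_filter.1 hp).2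
  have hple : ∀ p ∈ Nat.primesLE y, p ≤ y := fun p hp => by
    have := Finset.mem_range.1 (Finset.mem_filter.1 hp).1; omega
  have hlogp : ∀ p ∈ Nat.primesLE y, 0 ≤ Real.log p := fun p hp =>
    Real.log_nonneg (by exact_mod_cast (hprime p hp).one_le)
  have hly : 0 < Real.log y := Real.log_pos (by exact_mod_cast (by omega : 1 < y))
  have hl4 : Real.log 4 ≤ Real.log y := Real.log_le_log (by norm_num) (by exact_mod_cast hy)
  set B := (grid N).filter (fun z => IsCoprime (av M0 N z.1) (bv M0 N z.2) ∧
      50 * Real.log y < ∑ p ∈ (Nat.primesLE y).filter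
        (fun p : ℕ => (p : ℤ) ∣ GG (av M0 N z.1) (bv M0 N z.2)), Real.log p) with hB
  have key : (B.card : ℝ) * (50 * Real.log y) ≤ 12 * (N : ℝ) ^ 2 * (2 * Real.log y) := by
    calc (B.card : ℝ) * (50 * Real.log y) = ∑ z ∈ B, (50 * Real.log y) := by
          rw [Finset.sum_const, nsmul_eq_mul]
      _ ≤ ∑ z ∈ B, ∑ p ∈ Nat.primesLE y,
          if (p : ℤ) ∣ GG (av M0 N z.1) (bv M0 N z.2) then Real.log p else 0 := by
          apply Finset.sum_le_sum
          intro z hz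
          rw [← Finset.sum_filter]
          exact (Finset.mem_filter.1 hz).2.2.le
      _ = ∑ p ∈ Nat.primesLE y, ((B.filter (fun z =>
          (p : ℤ) ∣ GG (av M0 N z.1) (bv M0 N z.2))).card : ℝ) * Real.log p := by
          rw [Finset.sum_comm]
          apply Finset.sum_congr rfl
          intro p _
          rw [← Finset.sum_filter, Finset.sum_const, nsmul_eq_mul]
      _ ≤ ∑ p ∈ Nat.primesLE y, 12 * (N : ℝ) ^ 2 * (Real.log p / p) := by
          apply Finset.sum_le_sum
          intro p hp
          have hpp := hprime p hp
          have hp0 : (0 : ℝ) < p := by exact_mod_cast hpp.pos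
          have hc : ((B.filter (fun z => (p : ℤ) ∣ GG (av M0 N z.1) (bv M0 N z.2))).card : ℝ) ≤
              12 * (N : ℝ) ^ 2 / p := by
            by_cases hpM : p ∣ 3 * M0
            · rw [Finset.filter_false_of_mem]
              · simp only [Finset.card_empty, Nat.cast_zero]; positivity
              · intro z _
                exact GG_not_dvd_of_dvd_M M0 N z.1 z.2 h3 p hpp hpM
            · have h1 := (Finset.card_le_card (s := B.filter (fun z =>
                (p : ℤ) ∣ GG (av M0 N z.1) (bv M0 N z.2))) (by
                  intro z hz
                  obtain ⟨hz, hd⟩ := Finset.mem_filter.1 hz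
                  obtain ⟨hz, hc, -⟩ := Finset.mem_filter.1 hz
                  exact Finset.mem_filter.2 ⟨hz, hc, hd⟩)).trans (card_GG M0 N p hpp hpM)
              have h2 := (Nat.cast_le (α := ℝ)).2 h1
              refine h2.trans ?_
              push_cast
              have h3 := real_div_le N p
              have h4 : (1 : ℝ) ≤ N / p := by
                rw [le_div_iff₀ hp0, one_mul]
                exact_mod_cast (hple p hp).trans hyN
              calc 6 * (((N / p : ℕ) : ℝ) + 1) * N ≤ 6 * ((N : ℝ) / p + N / p) * N := by gcongr
                _ = _ := by ring
          calc _ ≤ 12 * (N : ℝ) ^ 2 / p * Real.log p := by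
                gcongr
            _ = _ := by ring
      _ ≤ 12 * (N : ℝ) ^ 2 * (2 * Real.log y) := by
          rw [← Finset.mul_sum]
          gcongr
          have := mertens_upper y (by omega)
          linarith
  have : (B.card : ℝ) * (50 * Real.log y) ≤ (12 * (N : ℝ) ^ 2 / 25) * (50 * Real.log y) := by
    refine key.trans (le_of_eq ?_); ring
  exact le_of_mul_le_mul_right this (by positivity)

/-- Residues `t` with `p ∣ GG t 1`. -/
def resid (p : ℕ) : Finset ℕ := (Finset.range p).filter (fun t : ℕ => (p : ℤ) ∣ GG (t : ℤ) 1)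

lemma card_resid (p : ℕ) (hp : p.Prime) (hp3 : p ≠ 3) : (resid p).card ≤ 12 := by
  have hpi : Prime (p : ℤ) := Nat.prime_iff_prime_int.1 hp
  have h3 : ¬ (p : ℤ) ∣ 3 := by
    intro h; exact hp3 ((Nat.prime_dvd_prime_iff_eq hp Nat.prime_three).1 (by exact_mod_cast h))
  have h1 : ¬ (p : ℤ) ∣ 1 := fun h => hpi.not_isUnit (isUnit_of_dvd_one h)
  have c1 := card_quad p p 1 hp le_rfl hp3 3 (-2) 1 h3 h1
  have c2 := card_quad p p 1 hp le_rfl hp3 1 0 1 h1 h1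
  have c3 := card_quad p p 1 hp le_rfl hp3 1 (-2) 1 h1 h1
  have hpp : p / p ^ 1 = 1 := by rw [pow_one, Nat.div_self hp.pos]
  rw [hpp] at c1 c2 c3
  have hsub : resid p ⊆ ((Finset.range p).filter (fun u : ℕ => (p : ℤ) ^ 1 ∣
      (3 * (u : ℤ) + -2) ^ 2 + (3 * u + -2) * 1 + 1 ^ 2) ∪
      (Finset.range p).filter (fun u : ℕ => (p : ℤ) ^ 1 ∣
      (1 * (u : ℤ) + 0) ^ 2 + (1 * u + 0) * 1 + 1 ^ 2)) ∪
      (Finset.range p).filter (fun u : ℕ => (p : ℤ) ^ 1 ∣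
      (1 * (u : ℤ) + -2) ^ 2 + (1 * u + -2) * 1 + 1 ^ 2) := by
    intro t ht
    obtain ⟨ht, hd⟩ := Finset.mem_filter.1 ht
    unfold GG at hd
    rw [Finset.mem_union, Finset.mem_union, Finset.mem_filter, Finset.mem_filter,
      Finset.mem_filter]
    rw [pow_one]
    rcases hpi.dvd_or_dvd hd with h | h
    · rcases hpi.dvd_or_dvd h with h | h
      · refine Or.inl (Or.inl ⟨ht, ?_⟩)
        have e : (3 * (t : ℤ) + -2) ^ 2 + (3 * t + -2) * 1 + 1 ^ 2 = 3 * G1 t 1 := by unfold G1; ring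
        rw [e]; exact Dvd.dvd.mul_left h 3
      · refine Or.inl (Or.inr ⟨ht, ?_⟩)
        have e : (1 * (t : ℤ) + 0) ^ 2 + (1 * t + 0) * 1 + 1 ^ 2 = G2 t 1 := by unfold G2; ring
        rw [e]; exact h
    · refine Or.inr ⟨ht, ?_⟩
      have e : (1 * (t : ℤ) + -2) ^ 2 + (1 * t + -2) * 1 + 1 ^ 2 = G3 t 1 := by unfold G3; ring
      rw [e]; exact h
  have := (Finset.card_le_card hsub).trans ((Finset.card_union_le _ _).trans
    (Nat.add_le_add_right (Finset.card_union_le _ _) _))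
  omega

lemma exists_resid (p : ℕ) (hp : p.Prime) (hp3 : p ≠ 3) (a b : ℤ) (hab : IsCoprime a b)
    (hd : (p : ℤ) ∣ GG a b) : ∃ t ∈ resid p, (p : ℤ) ∣ a - t * b := by
  have hpi : Prime (p : ℤ) := Nat.prime_iff_prime_int.1 hp
  have h3 : ¬ (p : ℤ) ∣ 3 := by
    intro h; exact hp3 ((Nat.prime_dvd_prime_iff_eq hp Nat.prime_three).1 (by exact_mod_cast h))
  have hb : ¬ (p : ℤ) ∣ b := by
    intro hb
    have e2 : GG a b ≡ GG a 0 [ZMOD p] := by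
      have e3 : b ≡ 0 [ZMOD p] := Int.modEq_zero_iff_dvd.2 hb
      unfold GG G1 G2 G3
      gcongr
    have e4 : GG a 0 = 3 * a ^ 6 := by unfold GG G1 G2 G3; ring
    rw [e4] at e2
    have : (p : ℤ) ∣ 3 * a ^ 6 :=
      Int.modEq_zero_iff_dvd.1 (e2.symm.trans (Int.modEq_zero_iff_dvd.2 hd))
    rcases hpi.dvd_or_dvd this with h | h
    · exact h3 h
    · exact not_dvd_both hpi hab ⟨hpi.dvd_of_dvd_pow h, hb⟩
  obtain ⟨x, y, hxy⟩ := (Prime.coprime_iff_not_dvd hpi).2 hb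
  have hp0 : (0 : ℤ) < p := by exact_mod_cast hp.pos
  have n0 := Int.emod_nonneg (a * y) hp0.ne'
  have hlt := Int.emod_lt_of_pos (a * y) hp0
  obtain ⟨t, ht⟩ := Int.eq_ofNat_of_zero_le n0
  have hdt : (p : ℤ) ∣ a - t * b := by
    have e1 := Int.emod_add_mul_ediv (a * y) p
    rw [ht] at e1
    exact ⟨a * x + ((a * y) / p) * b, by linear_combination (-a) * hxy + (-b) * e1⟩
  refine ⟨t, Finset.mem_filter.2 ⟨Finset.mem_range.2 (by omega), ?_⟩, hdt⟩
  have hb6 : (p : ℤ) ∣ b ^ 6 * GG t 1 := by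
    have e1 : b ^ 6 * GG t 1 = GG (t * b) b := by unfold GG G1 G2 G3; ring
    have e2 : GG (t * b) b ≡ GG a b [ZMOD p] := by
      have e3 : (t : ℤ) * b ≡ a [ZMOD p] := Int.modEq_iff_dvd.2 hdt
      unfold GG G1 G2 G3
      gcongr
    rw [e1]
    exact Int.modEq_zero_iff_dvd.1 (e2.trans (Int.modEq_zero_iff_dvd.2 hd))
  rcases hpi.dvd_or_dvd hb6 with h | h
  · exact absurd (hpi.dvd_of_dvd_pow h) hb
  · exact h

lemma eq_of_cross (a b c d : ℤ) (ha : 0 < a) (hc : 0 < c)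
    (hab : IsCoprime a b) (hcd : IsCoprime c d) (h : a * d = b * c) : a = c ∧ b = d := by
  have h1 : a ∣ c := hab.dvd_of_dvd_mul_left (Dvd.intro _ h)
  have h2 : c ∣ a := hcd.dvd_of_dvd_mul_right (Dvd.intro_left _ h.symm)
  have h3 : a = c := le_antisymm (Int.le_of_dvd hc h1) (Int.le_of_dvd ha h2)
  subst h3
  refine ⟨rfl, ?_⟩
  have : a * d = a * b := by rw [h]; ring
  exact (mul_left_cancel₀ ha.ne' this).symm

lemma mult_bound (y B g : ℕ) (hy : 2 ≤ y) (T : Finset (ℤ × ℤ))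
    (hT : ∀ z ∈ T, 0 < z.1 ∧ 0 < z.2 ∧ z.1 ≤ B ∧ z.2 ≤ B ∧ IsCoprime z.1 z.2 ∧ GG z.1 z.2 = g)
    (h3 : ¬ 3 ∣ g) (hcf : ∀ p : ℕ, p.Prime → ¬ p ^ 3 ∣ g)
    (hsm : ∏ p ∈ g.primeFactors.filter (fun p => p ≤ y), p ≤ y ^ 50)
    (hlow : y ^ 600 ≤ 64 * g) (hup : g ≤ y ^ 700) (hB : 8 * B ^ 2 < y ^ 250) :
    T.card ≤ 12 ^ 700 := by
  have hg0 : g ≠ 0 := by rintro rfl; simp at h3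
  set P := g.primeFactors.filter (fun p => ¬ p ≤ y) with hP
  have hPp : ∀ p ∈ P, p.Prime := fun p hp => Nat.prime_of_mem_primeFactors (Finset.mem_filter.1 hp).1
  have hPd : ∀ p ∈ P, p ∣ g := fun p hp => Nat.dvd_of_mem_primeFactors (Finset.mem_filter.1 hp).1
  have hPy : ∀ p ∈ P, y ≤ p := fun p hp => by have := (Finset.mem_filter.1 hp).2; omega
  have hP3 : ∀ p ∈ P, p ≠ 3 := by rintro p hp rfl; exact h3 (hPd _ hp)
  -- lower bound for the product of large primes
  have hrad : g ≤ (∏ p ∈ g.primeFactors, p) ^ 2 := by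
    calc g = ∏ p ∈ g.primeFactors, p ^ g.factorization p := by
          conv_lhs => rw [← Nat.prod_factorization_pow_eq_self hg0]
          rfl
      _ ≤ ∏ p ∈ g.primeFactors, p ^ 2 := by
          apply Finset.prod_le_prod' 
          intro p hp
          have hpp := Nat.prime_of_mem_primeFactors hp
          refine Nat.pow_le_pow_right hpp.pos ?_
          by_contra hcon
          exact hcf p hpp ((hpp.pow_dvd_iff_le_factorization hg0).2 (by omega))
      _ = _ := by rw [Finset.prod_pow]
  have hsplit := Finset.prod_filter_mul_prod_filter_not g.primeFactors (fun p => p ≤ y) (fun p => p)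
  rw [← hP] at hsplit
  set b := ∏ p ∈ P, p with hb
  have hbig : y ^ 250 ≤ 8 * b := by
    have h1 : y ^ 600 ≤ 64 * (y ^ 50 * b) ^ 2 := by
      calc y ^ 600 ≤ 64 * g := hlow
        _ ≤ 64 * (∏ p ∈ g.primeFactors, p) ^ 2 := by gcongr
        _ ≤ 64 * (y ^ 50 * b) ^ 2 := by rw [← hsplit]; gcongr
    have h2 : y ^ 100 * (y ^ 250) ^ 2 ≤ y ^ 100 * (8 * b) ^ 2 := by
      calc y ^ 100 * (y ^ 250) ^ 2 = y ^ 600 := by rw [← pow_mul, ← pow_add]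
        _ ≤ _ := h1
        _ = y ^ 100 * (8 * b) ^ 2 := by rw [mul_pow (y ^ 50), ← pow_mul]; ring
    have h3 : (y ^ 250) ^ 2 ≤ (8 * b) ^ 2 := Nat.le_of_mul_le_mul_left h2 (by positivity)
    exact le_of_pow_le_pow_left₀ (by norm_num) (Nat.zero_le _) h3
  have hBb : B ^ 2 < b := by omega
  have hbd : ∀ n : ℕ, (∀ p ∈ P, p ∣ n) → b ∣ n := fun n hn =>
    Finset.prod_primes_dvd n (fun p hp => (hPp p hp).prime) hn
  have hcard : P.card ≤ 700 := by
    have h1 : y ^ P.card ≤ b := by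
      rw [hb, ← Finset.prod_const]
      exact Finset.prod_le_prod' hPy
    have h2 : b ≤ g := Nat.le_of_dvd (Nat.pos_of_ne_zero hg0) (hbd g hPd)
    exact (Nat.pow_le_pow_iff_right (by omega)).1 ((h1.trans h2).trans hup)
  have hex : ∀ z : ℤ × ℤ, ∀ p : ℕ, ∃ t : ℕ, z ∈ T → p ∈ P → t ∈ resid p ∧ (p : ℤ) ∣ z.1 - t * z.2 := by
    intro z p
    by_cases h : z ∈ T ∧ p ∈ P
    · obtain ⟨-, -, -, -, hc, hG⟩ := hT z h.1
      obtain ⟨t, h1, h2⟩ := exists_resid p (hPp p h.2) (hP3 p h.2) z.1 z.2 hc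
        (by rw [hG]; exact_mod_cast hPd p h.2)
      exact ⟨t, fun _ _ => ⟨h1, h2⟩⟩
    · exact ⟨0, fun h1 h2 => absurd ⟨h1, h2⟩ h⟩
  choose τ hτ using hex
  calc T.card ≤ (P.pi resid).card := by
        refine Finset.card_le_card_of_injOn (fun z p _ => τ z p) ?_ ?_
        · intro z hz
          exact Finset.mem_coe.2 (Finset.mem_pi.2 fun p hp => (hτ z p hz hp).1)
        · intro z hz w hw hzw
          obtain ⟨a0, b0, aB, bB, hzc, -⟩ := hT z hz
          obtain ⟨c0, d0, cB, dB, hwc, -⟩ := hT w hw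
          have hdv : b ∣ (z.1 * w.2 - z.2 * w.1).natAbs := by
            apply hbd
            intro p hp
            have e1 := (hτ z p hz hp).2
            have e2 := (hτ w p hw hp).2
            have e3 : τ z p = τ w p := congrFun (congrFun hzw p) hp
            rw [e3] at e1
            rw [← Int.natCast_dvd]
            have : z.1 * w.2 - z.2 * w.1 = (z.1 - τ w p * z.2) * w.2 - (w.1 - τ w p * w.2) * z.2 := by
              ring
            rw [this]
            exact dvd_sub (Dvd.dvd.mul_right e1 _) (Dvd.dvd.mul_right e2 _)
          have hlt : (z.1 * w.2 - z.2 * w.1).natAbs < b := by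
            have hBb' : (B : ℤ) ^ 2 < b := by exact_mod_cast hBb
            have m1 : 0 < z.1 * w.2 := mul_pos a0 d0
            have m2 : 0 < z.2 * w.1 := mul_pos b0 c0
            have m3 : z.1 * w.2 ≤ (B : ℤ) ^ 2 := by rw [pow_two]; gcongr
            have m4 : z.2 * w.1 ≤ (B : ℤ) ^ 2 := by rw [pow_two]; gcongr
            omega
          have h0 := Nat.eq_zero_of_dvd_of_lt hdv hlt
          have h1 : z.1 * w.2 = z.2 * w.1 := by omega
          obtain ⟨e1, e2⟩ := eq_of_cross _ _ _ _ a0 c0 hzc hwc h1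
          exact Prod.ext e1 e2
    _ = ∏ p ∈ P, (resid p).card := Finset.card_pi _ _
    _ ≤ ∏ p ∈ P, 12 := Finset.prod_le_prod' fun p hp => card_resid p (hPp p hp) (hP3 p hp)
    _ = 12 ^ P.card := Finset.prod_const _
    _ ≤ 12 ^ 700 := Nat.pow_le_pow_right (by norm_num) hcard

/-- Good parameters. -/
def Good (M0 N y : ℕ) (z : ℕ × ℕ) : Prop :=
  IsCoprime (av M0 N z.1) (bv M0 N z.2) ∧
  (∀ p : ℕ, p.Prime → ¬ (p : ℤ) ^ 3 ∣ G1 (av M0 N z.1) (bv M0 N z.2) ∧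
    ¬ (p : ℤ) ^ 3 ∣ G2 (av M0 N z.1) (bv M0 N z.2) ∧ ¬ (p : ℤ) ^ 3 ∣ G3 (av M0 N z.1) (bv M0 N z.2)) ∧
  ∑ p ∈ (Nat.primesLE y).filter (fun p : ℕ => (p : ℤ) ∣ GG (av M0 N z.1) (bv M0 N z.2)),
    Real.log p ≤ 50 * Real.log y

open Classical in
lemma card_good (M0 N y : ℕ) (hM : 1 ≤ M0) (h3 : ¬ 3 ∣ M0)
    (h100 : ∀ p : ℕ, p.Prime → p ≤ 100 → p ∣ 3 * M0)
    (hN : 4 * 100 ^ 3 * (6 * M0 + 2 * M0 ^ 2) ^ 2 ≤ N) (hy : 4 ≤ y) (hyN : y ≤ N) :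
    (N : ℝ) ^ 2 / 4 ≤ (((grid N).filter (Good M0 N y)).card : ℝ) := by
  have b1 := card_bad1 M0 N hM h100
  have b2 := card_bad2 M0 N hM h3 h100 hN
  have b3 := card_bad3 M0 N y h3 hy hyN
  set B1 := (grid N).filter (fun z => ¬ IsCoprime (av M0 N z.1) (bv M0 N z.2))
  set B2 := (grid N).filter (fun z => IsCoprime (av M0 N z.1) (bv M0 N z.2) ∧ ∃ p : ℕ, p.Prime ∧
      ((p : ℤ) ^ 3 ∣ G1 (av M0 N z.1) (bv M0 N z.2) ∨ (p : ℤ) ^ 3 ∣ G2 (av M0 N z.1) (bv M0 N z.2) ∨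
       (p : ℤ) ^ 3 ∣ G3 (av M0 N z.1) (bv M0 N z.2))) with hB2
  set B3 := (grid N).filter (fun z => IsCoprime (av M0 N z.1) (bv M0 N z.2) ∧
      50 * Real.log y < ∑ p ∈ (Nat.primesLE y).filter
        (fun p : ℕ => (p : ℤ) ∣ GG (av M0 N z.1) (bv M0 N z.2)), Real.log p) with hB3
  have hsub : grid N ⊆ (((grid N).filter (Good M0 N y) ∪ B1) ∪ B2) ∪ B3 := by
    intro z hz
    by_cases h1 : IsCoprime (av M0 N z.1) (bv M0 N z.2)
    · by_cases h2 : ∃ p : ℕ, p.Prime ∧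
        ((p : ℤ) ^ 3 ∣ G1 (av M0 N z.1) (bv M0 N z.2) ∨ (p : ℤ) ^ 3 ∣ G2 (av M0 N z.1) (bv M0 N z.2) ∨
        (p : ℤ) ^ 3 ∣ G3 (av M0 N z.1) (bv M0 N z.2))
      · exact Finset.mem_union_left _ (Finset.mem_union_right _ (Finset.mem_filter.2 ⟨hz, h1, h2⟩))
      · by_cases h4 : 50 * Real.log y < ∑ p ∈ (Nat.primesLE y).filter
          (fun p : ℕ => (p : ℤ) ∣ GG (av M0 N z.1) (bv M0 N z.2)), Real.log p
        · exact Finset.mem_union_right _ (Finset.mem_filter.2 ⟨hz, h1, h4⟩)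
        · refine Finset.mem_union_left _ (Finset.mem_union_left _ (Finset.mem_union_left _
            (Finset.mem_filter.2 ⟨hz, h1, ?_, not_lt.1 h4⟩)))
          intro p hp
          refine ⟨fun h => h2 ⟨p, hp, Or.inl h⟩, fun h => h2 ⟨p, hp, Or.inr (Or.inl h)⟩,
            fun h => h2 ⟨p, hp, Or.inr (Or.inr h)⟩⟩
    · exact Finset.mem_union_left _ (Finset.mem_union_left _ (Finset.mem_union_right _
        (Finset.mem_filter.2 ⟨hz, h1⟩)))
  have hc : N * N ≤ ((grid N).filter (Good M0 N y)).card + B1.card + B2.card + B3.card := by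
    have e : (grid N).card = N * N := by simp [grid]
    rw [← e]
    refine (Finset.card_le_card hsub).trans ((Finset.card_union_le _ _).trans
      (Nat.add_le_add_right ((Finset.card_union_le _ _).trans
        (Nat.add_le_add_right (Finset.card_union_le _ _) _)) _))
  have hc' := (Nat.cast_le (α := ℝ)).2 hc
  push_cast at hc'
  set C0 := 6 * M0 + 2 * M0 ^ 2 with hC0
  have hC1 : 1 ≤ C0 := by omega
  have hCN : 20 * C0 ≤ N := by
    calc 20 * C0 ≤ 4 * 100 ^ 3 * C0 ^ 2 := by nlinarith
      _ ≤ N := hN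
  have hCN' : (20 : ℝ) * C0 ≤ N := by exact_mod_cast hCN
  have hN0 : (0 : ℝ) ≤ N := by positivity
  nlinarith

lemma Good.adm {M0 N y : ℕ} {z : ℕ × ℕ} (h : Good M0 N y z) (hM : 1 ≤ M0) (h3 : ¬ 3 ∣ M0)
    (h100 : ∀ p : ℕ, p.Prime → p ≤ 100 → p ∣ 3 * M0) (hN : 3 ≤ N) (hz : z ∈ grid N) :
    Adm (av M0 N z.1) (bv M0 N z.2) := by
  obtain ⟨hz1, hz2⟩ := Finset.mem_product.1 hz
  have b1 := av_bounds M0 N z.1 hM (Finset.mem_range.1 hz1)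
  have b2 := bv_bounds M0 N z.2 hM (Finset.mem_range.1 hz2)
  have hN' : (3 : ℤ) ≤ N := by exact_mod_cast hN
  obtain ⟨⟨l1, u1⟩, ⟨l2, u2⟩, l3, u3⟩ := G_bounds _ _ N _ (by linarith) b1.1 b2.1 b1.2 b2.2
  have hN2 : (9 : ℤ) ≤ (N : ℤ) ^ 2 := by nlinarith
  have nd : ∀ p : ℕ, p.Prime → p ≤ 100 → ¬ (p : ℤ) ∣ GG (av M0 N z.1) (bv M0 N z.2) :=
    fun p hp hp' => GG_not_dvd_of_dvd_M M0 N z.1 z.2 h3 p hp (h100 p hp hp')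
  refine ⟨h.1, ?_, ?_, ?_, h.2.1, by linarith, by linarith⟩
  · exact_mod_cast nd 2 (by norm_num) (by norm_num)
  · exact_mod_cast nd 3 (by norm_num) (by norm_num)
  · exact_mod_cast nd 7 (by norm_num) (by norm_num)

lemma smooth_bound (g y : ℕ) (hg : g ≠ 0) (hy : 1 ≤ y)
    (h : ∑ p ∈ (Nat.primesLE y).filter (fun p : ℕ => (p : ℤ) ∣ (g : ℤ)), Real.log p
      ≤ 50 * Real.log y) : ∏ p ∈ g.primeFactors.filter (fun p => p ≤ y), p ≤ y ^ 50 := by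
  have e : (Nat.primesLE y).filter (fun p : ℕ => (p : ℤ) ∣ (g : ℤ)) =
      g.primeFactors.filter (fun p => p ≤ y) := by
    ext p
    simp only [Finset.mem_filter, Nat.primesLE, Nat.primesBelow, Finset.mem_range,
      Nat.mem_primeFactors, Int.natCast_dvd_natCast, Nat.lt_succ_iff]
    tauto
  rw [e] at h
  have hpos : ∀ p ∈ g.primeFactors.filter (fun p => p ≤ y), (p : ℝ) ≠ 0 := by
    intro p hp
    have := (Nat.prime_of_mem_primeFactors (Finset.mem_filter.1 hp).1).pos
    positivity
  rw [← Real.log_prod hpos, show (50 : ℝ) = ((50 : ℕ) : ℝ) by norm_num, ← Real.log_pow] at h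
  have h' := (Real.log_le_log_iff (Finset.prod_pos fun p hp =>
    lt_of_le_of_ne (Nat.cast_nonneg p) (hpos p hp).symm) (by positivity)).1 h
  rw [← Nat.cast_prod, ← Nat.cast_pow] at h'
  exact Nat.cast_le.1 h'

open Classical in
lemma count_values (M0 : ℕ) (hM : 1 ≤ M0) (h3 : ¬ 3 ∣ M0)
    (h100 : ∀ p : ℕ, p.Prime → p ≤ 100 → p ∣ 3 * M0) (C0 : ℕ) (hC0 : C0 = 6 * M0 + 2 * M0 ^ 2)
    (y : ℕ) (hy : 4 * 100 ^ 3 * 64 * C0 ^ 6 ≤ y) :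
    ∃ V : Finset ℤ, (∀ d ∈ V, Cubefree d ∧ |d| ≤ 63 * 64 * (C0 : ℤ) ^ 6 * (y : ℤ) ^ 600 ∧
      2 ≤ Module.rank ℤ (W12 d).Point) ∧ (y : ℝ) ^ 200 / 4 ≤ (12 : ℝ) ^ 700 * V.card := by
  have hC1 : 1 ≤ C0 := by omega
  have hC2 : C0 ^ 2 ≤ C0 ^ 6 := Nat.pow_le_pow_right hC1 (by norm_num)
  have hC6 : 1 ≤ C0 ^ 6 := Nat.one_le_pow _ _ hC1
  have hy4 : 4 ≤ y := by omega
  obtain ⟨N, hNdef⟩ : ∃ N, N = y ^ 100 := ⟨_, rfl⟩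
  have hyN : y ≤ N := by rw [hNdef]; exact Nat.le_self_pow (by norm_num) y
  have hN : 4 * 100 ^ 3 * (6 * M0 + 2 * M0 ^ 2) ^ 2 ≤ N := by rw [← hC0]; omega
  have hgood := card_good M0 N y hM h3 h100 hN hy4 hyN
  have hadm : ∀ z ∈ (grid N).filter (Good M0 N y), Adm (av M0 N z.1) (bv M0 N z.2) := by
    intro z hz
    obtain ⟨hz, hg⟩ := Finset.mem_filter.1 hz
    exact hg.adm hM h3 h100 (by omega) hz
  have hsize : ∀ z ∈ grid N, 0 < av M0 N z.1 ∧ 0 < bv M0 N z.2 ∧ av M0 N z.1 ≤ (C0 * N : ℕ) ∧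
      bv M0 N z.2 ≤ (C0 * N : ℕ) ∧ (N : ℤ) ^ 6 ≤ 64 * GG (av M0 N z.1) (bv M0 N z.2) ∧
      GG (av M0 N z.1) (bv M0 N z.2) ≤ 64 * (C0 : ℤ) ^ 6 * (N : ℤ) ^ 6 := by
    intro z hz
    obtain ⟨hz1, hz2⟩ := Finset.mem_product.1 hz
    have b1 := av_bounds M0 N z.1 hM (Finset.mem_range.1 hz1)
    have b2 := bv_bounds M0 N z.2 hM (Finset.mem_range.1 hz2)
    rw [← hC0] at b1 b2
    have hN' : (0 : ℤ) < N := by exact_mod_cast (by omega : 0 < N)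
    obtain ⟨⟨l1, u1⟩, ⟨l2, u2⟩, l3, u3⟩ := G_bounds _ _ N _ hN' b1.1 b2.1 b1.2 b2.2
    have hN2 : (0 : ℤ) < (N : ℤ) ^ 2 := by positivity
    push_cast
    refine ⟨by linarith, by linarith, b1.2, b2.2, ?_, ?_⟩
    · calc (N : ℤ) ^ 6 = (N : ℤ) ^ 2 * (N : ℤ) ^ 2 * (N : ℤ) ^ 2 := by ring
        _ ≤ (4 * G1 (av M0 N z.1) (bv M0 N z.2)) * (4 * G2 (av M0 N z.1) (bv M0 N z.2)) *
            (4 * G3 (av M0 N z.1) (bv M0 N z.2)) := by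
            apply mul_le_mul (mul_le_mul l1 l2 hN2.le (by linarith)) l3 hN2.le
            exact mul_nonneg (by linarith) (by linarith)
        _ = _ := by unfold GG; ring
    · calc GG (av M0 N z.1) (bv M0 N z.2) ≤ (4 * ((C0 : ℤ) * N) ^ 2) * (4 * ((C0 : ℤ) * N) ^ 2) *
            (4 * ((C0 : ℤ) * N) ^ 2) := by
            unfold GG
            apply mul_le_mul (mul_le_mul u1 u2 (by linarith) (by positivity)) u3 (by linarith)
            positivity
        _ = _ := by ring
  have hN600 : N ^ 6 = y ^ 600 := by rw [hNdef, ← pow_mul]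
  refine ⟨((grid N).filter (Good M0 N y)).image (fun z => 63 * GG (av M0 N z.1) (bv M0 N z.2)),
    ?_, ?_⟩
  · intro d hd
    obtain ⟨z, hz, rfl⟩ := Finset.mem_image.1 hd
    refine ⟨(hadm z hz).cubefree, ?_, (hadm z hz).rank⟩
    obtain ⟨-, -, -, -, l, u⟩ := hsize z (Finset.mem_filter.1 hz).1
    have hN600' : (N : ℤ) ^ 6 = (y : ℤ) ^ 600 := by exact_mod_cast hN600
    have hN6 : (0 : ℤ) ≤ (N : ℤ) ^ 6 := by positivity
    rw [← hN600', abs_of_nonneg (by linarith)]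
    linarith
  · have hmul := Finset.card_le_mul_card_image
      (f := fun z : ℕ × ℕ => 63 * GG (av M0 N z.1) (bv M0 N z.2))
      ((grid N).filter (Good M0 N y)) (12 ^ 700) (by
      intro d hd
      obtain ⟨z0, hz0, hd0⟩ := Finset.mem_image.1 hd
      have hz0' := Finset.mem_filter.1 hz0
      obtain ⟨p1, p2, p3, p4, l, u⟩ := hsize z0 hz0'.1
      have hN6 : (0 : ℤ) ≤ (N : ℤ) ^ 6 := by positivity
      obtain ⟨g, hg⟩ := Int.eq_ofNat_of_zero_le
        (show 0 ≤ GG (av M0 N z0.1) (bv M0 N z0.2) by linarith)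
      have hA := hadm z0 hz0
      have hGd := hz0'.2
      have hinj : Function.Injective (fun z : ℕ × ℕ => (av M0 N z.1, bv M0 N z.2)) := by
        rintro ⟨u1, v1⟩ ⟨u2, v2⟩ h
        simp only [Prod.mk.injEq, av, bv] at h
        have hM' : (3 * M0 : ℤ) ≠ 0 := by positivity
        have e1 := mul_left_cancel₀ hM' (add_right_cancel h.1)
        have e2 := mul_left_cancel₀ hM' (add_right_cancel h.2)
        rw [Prod.mk.injEq]; omega
      rw [← Finset.card_image_of_injective _ hinj]
      rw [hg] at l u
      refine mult_bound y (C0 * N) g (by omega) _ ?_ ?_ ?_ ?_ ?_ ?_ ?_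
      · intro w hw
        obtain ⟨z, hz, rfl⟩ := Finset.mem_image.1 hw
        obtain ⟨hz, hzd⟩ := Finset.mem_filter.1 hz
        obtain ⟨q1, q2, q3, q4, -, -⟩ := hsize z (Finset.mem_filter.1 hz).1
        refine ⟨q1, q2, q3, q4, (Finset.mem_filter.1 hz).2.1, ?_⟩
        simp only at hzd hd0 ⊢
        have : GG (av M0 N z.1) (bv M0 N z.2) = GG (av M0 N z0.1) (bv M0 N z0.2) := by linarith
        rw [this, hg]
      · have := hA.2.2.1
        rw [hg] at this
        exact_mod_cast this
      · intro p hp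
        have := hA.not_cube_dvd hp
        rw [hg] at this
        exact_mod_cast this
      · apply smooth_bound g y
        · rintro rfl
          have := hA.2.1
          rw [hg] at this
          simp at this
        · omega
        · have := hGd.2.2
          rwa [hg] at this
      · rw [← hN600]; exact_mod_cast l
      · have u' : g ≤ 64 * C0 ^ 6 * N ^ 6 := by exact_mod_cast u
        refine u'.trans ?_
        calc 64 * C0 ^ 6 * N ^ 6 ≤ N * N ^ 6 := by gcongr; omega
          _ = y ^ 700 := by rw [hN600, hNdef, ← pow_add]
      · calc 8 * (C0 * N) ^ 2 = (8 * C0 ^ 2) * N ^ 2 := by ring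
          _ < y * N ^ 2 := by
            apply Nat.mul_lt_mul_of_pos_right (by omega)
            have : 0 < N := by omega
            positivity
          _ = y ^ 201 := by rw [hNdef, ← pow_mul]; ring
          _ ≤ y ^ 250 := Nat.pow_le_pow_right (by omega) (by norm_num))
    have hmul' := (Nat.cast_le (α := ℝ)).2 hmul
    rw [Nat.cast_mul, Nat.cast_pow] at hmul'
    have hN2 : (N : ℝ) ^ 2 = (y : ℝ) ^ 200 := by rw [hNdef]; push_cast; rw [← pow_mul]
    rw [hN2] at hgood
    exact hgood.trans hmul'

lemma exists_M0 : ∃ M0 : ℕ, 1 ≤ M0 ∧ ¬ 3 ∣ M0 ∧ ∀ p : ℕ, p.Prime → p ≤ 100 → p ∣ 3 * M0 := by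
  refine ⟨∏ p ∈ (Nat.primesLE 100).erase 3, p, ?_, ?_, ?_⟩
  · refine Nat.succ_le_of_lt (Finset.prod_pos fun p hp => ?_)
    exact (Finset.mem_filter.1 (Finset.mem_of_mem_erase hp)).2.pos
  · intro h
    obtain ⟨p, hp, hd⟩ := (Nat.prime_three.prime.dvd_finsetProd_iff _).1 h
    have hpp := (Finset.mem_filter.1 (Finset.mem_of_mem_erase hp)).2
    exact Finset.ne_of_mem_erase hp ((Nat.prime_dvd_prime_iff_eq Nat.prime_three hpp).1 hd).symm
  · intro p hp hle
    by_cases h3 : p = 3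
    · rw [h3]; exact Dvd.intro _ rfl
    · refine Dvd.dvd.mul_left (Finset.dvd_prod_of_mem _ (Finset.mem_erase.2 ⟨h3, ?_⟩)) _
      exact Finset.mem_filter.2 ⟨Finset.mem_range.2 (by omega), hp⟩

lemma card_le_S₂ (X : ℝ) (V : Finset ℤ) (hV : ∀ d ∈ V, Cubefree d ∧ (|d| : ℝ) ≤ X ∧
    2 ≤ Module.rank ℤ (W12 d).Point) : V.card ≤ S₂ X := by
  unfold S₂
  rw [← Set.ncard_coe_finset]
  refine Set.ncard_le_ncard (fun d hd => hV d hd) ?_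
  refine (Set.finite_Icc (-⌊X⌋) ⌊X⌋).subset ?_
  rintro d ⟨-, hd, -⟩
  rw [← Int.cast_abs] at hd
  have h := Int.le_floor.2 hd
  exact abs_le.1 h

lemma final_step (A C Y0 : ℝ) (hA : 0 < A) (hC : 0 < C) (hY : 1 ≤ Y0) (m k : ℕ) (hk : m = 3 * k)
    (hk0 : 0 < k)
    (h : ∀ y : ℕ, Y0 ≤ y → ∀ X : ℝ, C * (y : ℝ) ^ m ≤ X → (y : ℝ) ^ k ≤ A * S₂ X) :
    ∃ c : ℝ, 0 < c ∧ ∃ X₀ : ℝ, ∀ X : ℝ, X₀ ≤ X → c * X ^ ((1 : ℝ) / 3) ≤ (S₂ X : ℝ) := by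
  refine ⟨(C ^ ((1 : ℝ) / 3) * 2 ^ k * A)⁻¹, by positivity, C * (Y0 + 1) ^ m, ?_⟩
  intro X hX
  have hX0 : 0 ≤ X / C := by
    have : 0 ≤ C * (Y0 + 1) ^ m := by positivity
    exact div_nonneg (this.trans hX) hC.le
  have hm0 : m ≠ 0 := by omega
  set r := (X / C) ^ ((m : ℝ)⁻¹) with hr
  have hr0 : 0 ≤ r := by positivity
  have hrm : r ^ m = X / C := Real.rpow_inv_natCast_pow hX0 hm0
  have hXr : X = C * r ^ m := by rw [hrm]; field_simp
  have hrY : Y0 + 1 ≤ r := by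
    have : (Y0 + 1) ^ m ≤ r ^ m := by
      rw [hrm, le_div_iff₀ hC]; linarith
    exact le_of_pow_le_pow_left₀ hm0 hr0 this
  have h1 := Nat.floor_le hr0
  have h2 := Nat.lt_floor_add_one r
  have h3 := h ⌊r⌋₊ (by linarith) X (by rw [hXr]; gcongr)
  have h4 : r ≤ 2 * (⌊r⌋₊ : ℝ) := by linarith
  have h5 : X ^ ((1 : ℝ) / 3) = C ^ ((1 : ℝ) / 3) * r ^ k := by
    rw [hXr, Real.mul_rpow hC.le (by positivity), hk, mul_comm 3 k, pow_mul]
    congr 1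
    rw [one_div]
    exact_mod_cast Real.pow_rpow_inv_natCast (n := 3) (by positivity : 0 ≤ r ^ k) (by norm_num)
  rw [inv_mul_le_iff₀ (by positivity), h5]
  calc C ^ ((1 : ℝ) / 3) * r ^ k ≤ C ^ ((1 : ℝ) / 3) * (2 * (⌊r⌋₊ : ℝ)) ^ k := by gcongr
    _ = C ^ ((1 : ℝ) / 3) * 2 ^ k * (⌊r⌋₊ : ℝ) ^ k := by rw [mul_pow]; ring
    _ ≤ C ^ ((1 : ℝ) / 3) * 2 ^ k * (A * S₂ X) := by gcongr
    _ = _ := by ring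

/-- `S₂(X) ≫ X^{1/3}`. -/
theorem S₂_lower_bound :
    ∃ c : ℝ, 0 < c ∧ ∃ X₀ : ℝ, ∀ X : ℝ, X₀ ≤ X → c * X ^ ((1 : ℝ) / 3) ≤ (S₂ X : ℝ) := by
  obtain ⟨M0, hM, h3, h100⟩ := exists_M0
  obtain ⟨C0, hC0⟩ : ∃ C0, C0 = 6 * M0 + 2 * M0 ^ 2 := ⟨_, rfl⟩
  have hC1 : 1 ≤ C0 := by omega
  have hC6 : 1 ≤ C0 ^ 6 := Nat.one_le_pow _ _ hC1
  refine final_step (4 * (12 : ℝ) ^ 700) ((63 * 64 * C0 ^ 6 : ℕ) : ℝ)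
    ((4 * 100 ^ 3 * 64 * C0 ^ 6 : ℕ) : ℝ) (mul_pos (by norm_num) (pow_pos (by norm_num) _))
    (by exact_mod_cast (by omega : 0 < 63 * 64 * C0 ^ 6))
    (by exact_mod_cast (by omega : 1 ≤ 4 * 100 ^ 3 * 64 * C0 ^ 6)) 600 200 (by norm_num)
    (by norm_num) ?_
  intro y hy X hX
  obtain ⟨V, hV, hcard⟩ := count_values M0 hM h3 h100 C0 hC0 y (by exact_mod_cast hy)
  have h1 := card_le_S₂ X V (fun d hd => by
    obtain ⟨v1, v2, v3⟩ := hV d hd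
    refine ⟨v1, ?_, v3⟩
    refine le_trans ?_ hX
    exact_mod_cast v2)
  have h2 : (V.card : ℝ) ≤ S₂ X := by exact_mod_cast h1
  have h3 : (12 : ℝ) ^ 700 * V.card ≤ (12 : ℝ) ^ 700 * S₂ X :=
    mul_le_mul_of_nonneg_left h2 (pow_nonneg (by norm_num) _)
  rw [mul_assoc]
  have h4 := hcard.trans h3
  generalize (12 : ℝ) ^ 700 * (S₂ X : ℝ) = w at h4 ⊢
  generalize (y : ℝ) ^ 200 = x at h4 ⊢
  linarith
end
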